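/- arXiv:2203.10330 — 9 statements merged into one kernel-verified Lean document; each statement's English description precedes it below -/
import Mathlib

section
/- For every sufficiently large n, every n×n binary matrix in which every row has at least 9 ones contains a nonempty set S of at most 0.49·n columns such that in the submatrix formed by the columns of S, every row has at least two ones. -/
/-!
Put each column into a random set `S` independently with probability `p = 2/5`, and then repair
every row that has fewer than two ones in `S` by adding one or two further columns from its support.
A row with nine ones meets `S` in a `Bin(9, p)`-distributed number of columns, so it requires
`𝔼 (2 - Bin(9, p))⁺ = 2 (3/5)⁹ + 9 (2/5) (3/5)⁸ < 0.09` repairs on average. By linearity of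
expectation, some `S` leads to at most `0.4 n + 0.09 n` columns in total.
-/

open Finset MeasureTheory ProbabilityTheory unitInterval

section BinomialLaw

variable {α : Type*} (u v : Set α) (p : I)

lemma measurable_inter_left : Measurable (v ∩ ·) :=
  MeasurableEquiv.setOfPred.measurable.comp <| measurable_pi_lambda _ fun a ↦
    (Measurable.of_discrete (f := fun q : Prop ↦ a ∈ v ∧ q)).comp (measurable_set_mem a)

lemma map_inter_setBernoulli : setBer(u, p).map (v ∩ ·) = setBer(v ∩ u, p) := by
  have and_measurable (a : α) : Measurable fun q : Prop ↦ a ∈ v ∧ q := .of_discrete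
  have inter_eq : (v ∩ ·) ∘ (fun q : α → Prop ↦ {a | q a}) =
    (fun q : α → Prop ↦ {a | q a}) ∘ fun q a ↦ a ∈ v ∧ q a := rfl
  rw [setBernoulli_eq_map, setBernoulli_eq_map,
    Measure.map_map (measurable_inter_left v) (by fun_prop), inter_eq,
    ← Measure.map_map (by fun_prop) (by fun_prop), Measure.infinitePi_map_pi _ and_measurable]
  congr! 3 with a
  rw [Measure.map_add _ _ (and_measurable a)]
  simp [Measure.map_smul, Measure.map_dirac' (and_measurable a)]

variable {u v} [Countable α]

lemma map_ncard_setBernoulli (hu : u.Finite) : setBer(u, p).map Set.ncard = Bin(u.ncard, p) :=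
  Measure.ext_of_singleton fun k ↦ by
    rw [map_ncard_setBernoulli_singleton hu, binomial_singleton]

lemma hasLaw_ncard_inter_setBernoulli (hv : v.Finite) (hvu : v ⊆ u) :
    HasLaw (fun s ↦ (v ∩ s).ncard) Bin(v.ncard, p) setBer(u, p) where
  aemeasurable := (measurable_ncard.comp (measurable_inter_left v)).aemeasurable
  map_eq := by
    have inter_law := map_inter_setBernoulli u v p
    rw [Set.inter_eq_left.2 hvu] at inter_law
    rw [← map_ncard_setBernoulli p hv, ← inter_law,
      Measure.map_map (by fun_prop) (measurable_inter_left v)]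
    rfl

lemma integral_natCast_binomial (n : ℕ) : ∫ x, (x : ℝ) ∂Bin(n, p) = p * n := by
  have mean := congr_arg (Polynomial.eval (p : ℝ)) (bernsteinPolynomial.sum_smul ℝ n)
  simp only [bernsteinPolynomial, nsmul_eq_mul, Polynomial.eval_finsetSum, Polynomial.eval_mul,
    Polynomial.eval_natCast, Polynomial.eval_pow, Polynomial.eval_X, Polynomial.eval_sub,
    Polynomial.eval_one] at mean
  simpa only [integral_binomial, ← Nat.range_succ_eq_Iic, smul_eq_mul, mul_comm] using mean

end BinomialLaw

section Covering

variable {ι α : Type*} [Fintype ι] [DecidableEq α] {r k : ℕ}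

lemma exists_superset_forall_le_card_inter (R : ι → Finset α) (hR : ∀ i, r ≤ #(R i))
    (S : Finset α) :
    ∃ T ⊇ S, #T ≤ #S + ∑ i, (r - #(R i ∩ S)) ∧ ∀ i, r ≤ #(R i ∩ T) := by
  have repair (i) : ∃ U ⊆ R i \ S, #U = r - #(R i ∩ S) :=
    exists_subset_card_eq <| by grind [card_sdiff_add_card_inter (R i) S]
  choose U hUsub hUcard using repair
  refine ⟨S ∪ univ.biUnion U, subset_union_left, ?_, fun i ↦ ?_⟩
  · calc #(S ∪ univ.biUnion U) ≤ #S + #(univ.biUnion U) := card_union_le _ _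
      _ ≤ #S + ∑ i, #(U i) := by gcongr; exact card_biUnion_le
      _ = #S + ∑ i, (r - #(R i ∩ S)) := by simp only [hUcard]
  · have disj : Disjoint (R i ∩ S) (U i) :=
      disjoint_left.2 fun j hjS hjU ↦ (mem_sdiff.1 (hUsub i hjU)).2 (mem_inter.1 hjS).2
    calc r ≤ #(R i ∩ S) + #(U i) := by rw [hUcard]; omega
      _ = #(R i ∩ S ∪ U i) := (card_union_of_disjoint disj).symm
      _ ≤ #(R i ∩ (S ∪ univ.biUnion U)) := card_le_card <| by
        rw [inter_union_distrib_left]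
        exact union_subset_union_right <| subset_inter ((hUsub i).trans sdiff_subset)
          (subset_biUnion_of_mem U (mem_univ i))

variable [Fintype α]

lemma exists_card_add_sum_le_integral_binomial (R : ι → Finset α) (r : ℕ) (p : I) :
    ∃ S : Finset α, (#S : ℝ) + ∑ i, ((r - #(R i ∩ S) : ℕ) : ℝ) ≤
      p * Fintype.card α + ∑ i, ∫ x, ((r - x : ℕ) : ℝ) ∂Bin(#(R i), p) := by
  classical
  have card_law := hasLaw_ncard_inter_setBernoulli p (Set.finite_univ (α := α)) subset_rfl
  have row_law i := hasLaw_ncard_inter_setBernoulli p (R i).finite_toSet (Set.subset_univ _)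
  let cost (s : Set α) : ℝ :=
    ((Set.univ ∩ s).ncard : ℝ) + ∑ i, ((r - (↑(R i) ∩ s).ncard : ℕ) : ℝ)
  have mean_cost : ∫ s, cost s ∂setBer(Set.univ, p) =
      p * Fintype.card α + ∑ i, ∫ x, ((r - x : ℕ) : ℝ) ∂Bin(#(R i), p) := by
    have mean_card := card_law.integral_comp (f := fun x ↦ (x : ℝ)) .of_discrete
    have mean_row i := (row_law i).integral_comp (f := fun x ↦ ((r - x : ℕ) : ℝ)) .of_discrete
    simp only [Function.comp_def, Set.ncard_coe_finset, Set.ncard_univ, Nat.card_eq_fintype_card,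
      integral_natCast_binomial] at mean_card mean_row
    rw [integral_add .of_finite .of_finite, integral_finsetSum _ fun _ _ ↦ .of_finite, mean_card]
    simp only [mean_row]
  obtain ⟨s, hs⟩ := exists_le_integral (μ := setBer(Set.univ, p)) (f := cost) .of_finite
  refine ⟨s.toFinset, le_trans (le_of_eq ?_) (hs.trans_eq mean_cost)⟩
  simp [cost, ← Set.ncard_coe_finset]

lemma exists_card_le_forall_le_card_inter (R : ι → Finset α) (hrk : r ≤ k)
    (hR : ∀ i, k ≤ #(R i)) (p : I) :
    ∃ T : Finset α, (#T : ℝ) ≤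
        p * Fintype.card α + Fintype.card ι * ∫ x, ((r - x : ℕ) : ℝ) ∂Bin(k, p) ∧
      ∀ i, r ≤ #(R i ∩ T) := by
  choose Q hQR hQcard using fun i ↦ exists_subset_card_eq (hR i)
  obtain ⟨S, hS⟩ := exists_card_add_sum_le_integral_binomial Q r p
  obtain ⟨T, -, hTcard, hT⟩ :=
    exists_superset_forall_le_card_inter Q (fun i ↦ hrk.trans_eq (hQcard i).symm) S
  refine ⟨T, ?_, fun i ↦ (hT i).trans (card_le_card (inter_subset_inter_right (hQR i)))⟩
  calc (#T : ℝ) ≤ #S + ∑ i, ((r - #(Q i ∩ S) : ℕ) : ℝ) := mod_cast hTcard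
    _ ≤ p * Fintype.card α + ∑ i, ∫ x, ((r - x : ℕ) : ℝ) ∂Bin(#(Q i), p) := hS
    _ = p * Fintype.card α + Fintype.card ι * ∫ x, ((r - x : ℕ) : ℝ) ∂Bin(k, p) := by
      simp [hQcard]

end Covering

lemma sum_eq_card_filter_of_le_one {α : Type*} {f : α → ℕ} (hf : ∀ a, f a ≤ 1) (s : Finset α) :
    ∑ a ∈ s, f a = #{a ∈ s | f a = 1} := by
  rw [card_filter]
  exact sum_congr rfl fun a _ ↦ by grind

theorem exists_card_le_forall_le_sum {ι α : Type*} [Fintype ι] [Fintype α] {r k : ℕ}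
    (hrk : r ≤ k) (A : ι → α → ℕ) (hA : ∀ i j, A i j ≤ 1) (hk : ∀ i, k ≤ ∑ j, A i j) (p : I) :
    ∃ S : Finset α, (#S : ℝ) ≤
        p * Fintype.card α + Fintype.card ι * ∫ x, ((r - x : ℕ) : ℝ) ∂Bin(k, p) ∧
      ∀ i, r ≤ ∑ j ∈ S, A i j := by
  classical
  simp only [sum_eq_card_filter_of_le_one (hA _)] at hk ⊢
  simpa only [filter_inter, univ_inter] using exists_card_le_forall_le_card_inter _ hrk hk p

lemma integral_two_tsub_binomial_nine_two_fifths_le (p : I) (hp : (p : ℝ) = 2 / 5) :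
    ∫ x, ((2 - x : ℕ) : ℝ) ∂Bin(9, p) ≤ 0.09 := by
  rw [integral_binomial, hp]
  norm_num [← Nat.range_succ_eq_Iic, sum_range_succ, Nat.choose]

theorem stmt_0_general {ι α : Type*} [Fintype ι] [Nonempty ι] [Fintype α] (A : ι → α → ℕ)
    (hA : ∀ i j, A i j ≤ 1) (h9 : ∀ i, 9 ≤ ∑ j, A i j) :
    ∃ S : Finset α, S.Nonempty ∧
      (#S : ℝ) ≤ 0.4 * Fintype.card α + 0.09 * Fintype.card ι ∧ ∀ i, 2 ≤ ∑ j ∈ S, A i j := by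
  let p : I := ⟨2 / 5, by norm_num, by norm_num⟩
  obtain ⟨S, hScard, hS⟩ := exists_card_le_forall_le_sum (by norm_num : 2 ≤ 9) A hA h9 p
  obtain ⟨i⟩ := ‹Nonempty ι›
  refine ⟨S, nonempty_of_sum_ne_zero (zero_lt_two.trans_le (hS i)).ne', hScard.trans ?_, hS⟩
  have repairs := integral_two_tsub_binomial_nine_two_fifths_le p rfl
  rw [mul_comm (0.09 : ℝ)]
  gcongr
  norm_num [p]

/-- For every sufficiently large `n`, every `n × n` binary matrix in which every row has
at least 9 ones contains a nonempty set `S` of at most `0.49 * n` columns such that in the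
submatrix formed by the columns of `S`, every row has at least two ones. -/
theorem stmt_0 :
    ∃ N : ℕ, ∀ n : ℕ, N ≤ n →
      ∀ A : Fin n → Fin n → ℕ,
        (∀ i j, A i j ≤ 1) →
        (∀ i, 9 ≤ ∑ j, A i j) →
        ∃ S : Finset (Fin n), S.Nonempty ∧ (S.card : ℝ) ≤ 0.49 * n ∧
          ∀ i, 2 ≤ ∑ j ∈ S, A i j := by
  refine ⟨1, fun n hn A hA h9 ↦ ?_⟩
  have : Nonempty (Fin n) := ⟨0, hn⟩
  simpa only [Fintype.card_fin, show (0.49 : ℝ) * n = 0.4 * n + 0.09 * n by ring] using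
    stmt_0_general A hA h9
end

section
/- Let n ≥ 5 and let A be the n×n binary matrix whose rows are the n cyclic rotations of the vector (1,1,1,1,0,…,0) of length n. Then every nonempty 1-free set of columns of A has cardinality at least n/2. Equivalently, for every nonzero x ∈ {0,1}^n, if the integer vector Ax has no coordinate equal to 1, then x has at least n/2 coordinates equal to 1. -/
/-!
Sliding the window of `k` consecutive columns one step around the cycle lets in at most one new
column, so the number of chosen columns in the window grows by at most one. Since this number is
never `1`, a window without chosen columns would be followed by empty windows all the way around,
and no column would be chosen. Hence every window contains at least two chosen columns. Each column
lies in at most `k` windows, so double counting gives `2 * n ≤ k * #S`.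
-/

open Finset
open scoped Fin.NatCast

section Cyclic

variable {n : ℕ} [NeZero n]

theorem forall_fin_of_forall_add_one {P : Fin n → Prop} {i : Fin n} (hi : P i)
    (hstep : ∀ j, P j → P (j + 1)) (j : Fin n) : P j := by
  have hshift (m : ℕ) : P (i + m) := by
    induction m with
    | zero => simpa using hi
    | succ m ih => simpa [add_assoc] using hstep _ ih
  simpa using hshift (j - i).val

theorem two_le_of_apply_add_one_le_of_ne_one {c : Fin n → ℕ} (hstep : ∀ i, c (i + 1) ≤ c i + 1)
    (hne_one : ∀ i, c i ≠ 1) {j : Fin n} (hj : c j ≠ 0) (i : Fin n) : 2 ≤ c i := by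
  have hne_zero : c i ≠ 0 := fun hi ↦
    hj <| forall_fin_of_forall_add_one (P := fun l ↦ c l = 0) hi
      (fun l hl ↦ by have := hstep l; have := hne_one (l + 1); omega) j
  have := hne_one i
  omega

end Cyclic

/-- The window `{i, i + 1, …, i + k - 1}` of cyclically consecutive columns, which supports row `i`
of the circulant matrix. It is encoded by the offset `j - i`, taken modulo `n`; for `n ≤ k` it
consists of all columns. -/
def cyclicWindow {n : ℕ} (k : ℕ) (i : Fin n) : Finset (Fin n) :=
  {j | (j - i).val < k}

namespace cyclicWindow

variable {n : ℕ} {k : ℕ}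

theorem mem_iff {i j : Fin n} : j ∈ cyclicWindow k i ↔ (j - i).val < k := by
  simp [cyclicWindow]

theorem mem_iff_mod_lt {i j : Fin n} : j ∈ cyclicWindow k i ↔ (j + n - i : ℕ) % n < k := by
  rw [mem_iff, Fin.val_sub, add_comm (n - i.val), ← Nat.add_sub_assoc i.is_lt.le]

variable [NeZero n]

theorem self_mem (hk : 0 < k) (i : Fin n) : i ∈ cyclicWindow k i := by
  simpa [mem_iff] using hk

theorem add_one_subset_insert (hk : 0 < k) (i : Fin n) :
    cyclicWindow k (i + 1) ⊆ insert (i + (k : Fin n)) (cyclicWindow k i) := by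
  intro j hj
  rw [mem_iff, ← sub_sub] at hj
  rw [mem_insert, mem_iff]
  by_cases hzero : j - i = 0
  · exact .inr (by simpa [hzero] using hk)
  · rw [Fin.val_sub_one_of_ne_zero hzero] at hj
    refine (lt_or_eq_of_le (by omega : (j - i).val ≤ k)).symm.imp_left fun hval ↦ ?_
    rw [← hval, Fin.cast_val_eq_self, add_sub_cancel]

theorem card_inter_add_one_le (hk : 0 < k) (S : Finset (Fin n)) (i : Fin n) :
    #(S ∩ cyclicWindow k (i + 1)) ≤ #(S ∩ cyclicWindow k i) + 1 := calc
  #(S ∩ cyclicWindow k (i + 1)) ≤ #(insert (i + (k : Fin n)) (S ∩ cyclicWindow k i)) := by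
    refine card_le_card fun j hj ↦ ?_
    have := add_one_subset_insert hk i (mem_inter.1 hj).2
    grind
  _ ≤ #(S ∩ cyclicWindow k i) + 1 := card_insert_le _ _

theorem card_filter_mem_le (k : ℕ) (j : Fin n) : #{i | j ∈ cyclicWindow k i} ≤ k := calc
  #{i | j ∈ cyclicWindow k i} = #{d : Fin n | d.val < k} :=
    card_equiv (Equiv.subLeft j) (by simp [mem_iff])
  _ = min n k := Fin.card_filter_val_lt
  _ ≤ k := min_le_right n k

theorem two_mul_le_mul_card (hk : 0 < k) {S : Finset (Fin n)} (hS : S.Nonempty)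
    (hfree : ∀ i, #(S ∩ cyclicWindow k i) ≠ 1) : 2 * n ≤ k * #S := by
  obtain ⟨j, hj⟩ := hS
  have hmeets : #(S ∩ cyclicWindow k j) ≠ 0 :=
    card_ne_zero_of_mem (mem_inter.2 ⟨hj, self_mem hk j⟩)
  have htwo := two_le_of_apply_add_one_le_of_ne_one (card_inter_add_one_le hk S) hfree hmeets
  have hcount : #(univ : Finset (Fin n)) * 2 ≤ #S * k :=
    card_mul_le_card_mul (fun i j ↦ j ∈ cyclicWindow k i)
      (fun i _ ↦ by simpa only [bipartiteAbove, filter_mem_eq_inter] using htwo i)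
      (fun j _ ↦ card_filter_mem_le k j)
  simpa [mul_comm] using hcount

end cyclicWindow

theorem stmt_1_general {n k : ℕ} (hk : 0 < k) (A : Fin n → Fin n → ℕ)
    (hA : ∀ i j : Fin n, A i j = if ((j : ℕ) + n - (i : ℕ)) % n < k then 1 else 0)
    (S : Finset (Fin n)) (hS : S.Nonempty)
    (hfree : ∀ i, ∑ j ∈ S, A i j ≠ 1) :
    2 * n ≤ k * S.card := by
  have : NeZero n := ⟨hS.choose.pos.ne'⟩
  have hrow (i : Fin n) : ∑ j ∈ S, A i j = #(S ∩ cyclicWindow k i) := by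
    simp only [hA, ← cyclicWindow.mem_iff_mod_lt, ← filter_mem_eq_inter, card_filter]
  exact cyclicWindow.two_mul_le_mul_card hk hS fun i ↦ hrow i ▸ hfree i

/-- Let `n ≥ 5` and let `A` be the `n × n` binary matrix whose rows are the `n` cyclic
rotations of the vector `(1,1,1,1,0,…,0)`: row `i` has its 1-entries in columns
`i, i+1, i+2, i+3 (mod n)`.  Then every nonempty 1-free set of columns of `A` has
cardinality at least `n / 2`. -/
theorem stmt_1 (n : ℕ) (hn : 5 ≤ n) (A : Fin n → Fin n → ℕ)
    (hA : ∀ i j : Fin n, A i j = if ((j : ℕ) + n - (i : ℕ)) % n < 4 then 1 else 0)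
    (S : Finset (Fin n)) (hS : S.Nonempty)
    (hfree : ∀ i, ∑ j ∈ S, A i j ≠ 1) :
    n ≤ 2 * S.card := by
  have := stmt_1_general four_pos A hA S hS hfree
  omega
end

section
/- For all positive integers n and k, every binary n×(n+k) matrix of the form A = [I_n | B], where I_n is the n×n identity matrix and B is a binary n×k matrix, has a nonempty 1-free set of at most n/H_k + k columns, where H_k = Σ_{ℓ=1}^{k} 1/ℓ is the k-th harmonic number. -/
/-!
Give a nonempty set `T` of columns of `B` the weight `1 / (|T| * C(k, |T|))`. The sets of size `t`
have total weight `1 / t`, so all of them together have weight `H_k`. For a fixed row, let `𝒜`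
consist of the singletons `{j}` at which the row has entry `1`. If the row has sum `1` over `T`,
then exactly one member of `𝒜` lies inside `T`, so the full weight of `T` is counted in the
Ahlswede–Zhang identity for `𝒜`, whose total is `1`. Averaging over `T`, some nonempty `T` leaves
at most `n / H_k` rows of sum `1`; adding the identity columns of these rows turns each such sum
into `2`.
-/

open Finset

section TruncatedInf

variable {α : Type*} [SemilatticeInf α] [BoundedOrder α] [DecidableLE α]

theorem truncatedInf_eq_of_filter_le_eq_singleton {s : Finset α} {a b : α}
    (h : {c ∈ s | c ≤ a} = {b}) : truncatedInf s a = b := by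
  have hb : b ∈ s ∧ b ≤ a := mem_filter.1 (h ▸ mem_singleton_self b)
  rw [truncatedInf_of_mem (mem_upperClosure.2 ⟨b, hb.1, hb.2⟩)]
  simp only [h, inf'_singleton, id_eq]

end TruncatedInf

section HarmonicWeight

variable {α : Type*} [Fintype α]

/-- The weight that the Ahlswede–Zhang identity attaches to a set `T`: the sets of each size `t ≥ 1`
share the total mass `1 / t` equally. The empty set has weight `0`, as `0⁻¹ = 0`. -/
def harmonicWeight (T : Finset α) : ℚ :=
  (#T * (Fintype.card α).choose #T : ℚ)⁻¹

theorem harmonicWeight_nonneg (T : Finset α) : 0 ≤ harmonicWeight T := by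
  unfold harmonicWeight
  positivity

theorem harmonicWeight_pos {T : Finset α} (hT : T.Nonempty) : 0 < harmonicWeight T := by
  have hchoose : 0 < (Fintype.card α).choose #T := Nat.choose_pos (card_le_univ T)
  exact inv_pos.2 (mul_pos (Nat.cast_pos.2 hT.card_pos) (Nat.cast_pos.2 hchoose))

theorem harmonicWeight_empty : harmonicWeight (∅ : Finset α) = 0 := by
  simp [harmonicWeight]

theorem sum_harmonicWeight :
    ∑ T : Finset α, harmonicWeight T = harmonic (Fintype.card α) := by
  set k := Fintype.card α with hk
  calc ∑ T : Finset α, harmonicWeight T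
      = ∑ t ∈ range (k + 1), k.choose t • (t * k.choose t : ℚ)⁻¹ := by
        rw [← powerset_univ, hk, ← card_univ]
        exact sum_powerset_apply_card fun t ↦ (t * (#univ).choose t : ℚ)⁻¹
    _ = ∑ t ∈ range (k + 1), (t : ℚ)⁻¹ := by
        refine sum_congr rfl fun t ht ↦ ?_
        have hchoose : (k.choose t : ℚ) ≠ 0 :=
          Nat.cast_ne_zero.2 (Nat.choose_pos (mem_range_succ_iff.1 ht)).ne'
        rw [nsmul_eq_mul, mul_inv_rev, mul_inv_cancel_left₀ hchoose]
    _ = harmonic k := by simp [sum_range_succ', harmonic]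

theorem infSum_le_one [DecidableEq α] {𝒜 : Finset (Finset α)} (h𝒜 : ∅ ∉ 𝒜) :
    AhlswedeZhang.infSum 𝒜 ≤ 1 := by
  rcases 𝒜.eq_empty_or_nonempty with rfl | ⟨s, hs⟩
  · simp [AhlswedeZhang.infSum]
  · obtain ⟨a, -⟩ := nonempty_iff_ne_empty.2 (ne_of_mem_of_not_mem hs h𝒜)
    have : Nonempty α := ⟨a⟩
    exact (AhlswedeZhang.infSum_eq_one ⟨s, hs⟩ h𝒜).le

theorem sum_harmonicWeight_truncatedInf_nonempty_le_one [DecidableEq α]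
    {𝒜 : Finset (Finset α)} (h𝒜 : ∅ ∉ 𝒜) :
    ∑ T with (truncatedInf 𝒜 T).Nonempty, harmonicWeight T ≤ 1 := by
  refine le_trans ?_ (infSum_le_one h𝒜)
  rw [sum_filter, AhlswedeZhang.infSum]
  refine sum_le_sum fun T _ ↦ ?_
  rw [div_eq_mul_inv, ← harmonicWeight]
  split_ifs with hT
  · exact le_mul_of_one_le_left (harmonicWeight_nonneg T) (mod_cast hT.card_pos)
  · exact mul_nonneg (Nat.cast_nonneg _) (harmonicWeight_nonneg T)

theorem truncatedInf_image_singleton_nonempty_of_sum_eq_one [DecidableEq α]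
    {f : α → ℕ} {T : Finset α} (hT : ∑ j ∈ T, f j = 1) :
    (truncatedInf (({j | f j = 1} : Finset α).image singleton) T).Nonempty := by
  obtain ⟨j, hj, hfj⟩ : ∃ j ∈ T, f j ≠ 0 := exists_ne_zero_of_sum_ne_zero (by simp [hT])
  have hsplit : f j + ∑ x ∈ T.erase j, f x = 1 := (add_sum_erase T f hj).trans hT
  have hfj_one : f j = 1 := by lia
  have hzero : ∀ x ∈ T.erase j, f x = 0 := sum_eq_zero_iff.1 (by lia)
  have hfilter :
      {s ∈ ({i | f i = 1} : Finset α).image (singleton : α → Finset α) | s ≤ T} = {{j}} := by grind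
  rw [truncatedInf_eq_of_filter_le_eq_singleton hfilter]
  exact singleton_nonempty j

theorem sum_harmonicWeight_sum_eq_one_le_one (f : α → ℕ) :
    ∑ T with ∑ j ∈ T, f j = 1, harmonicWeight T ≤ 1 := by
  classical
  refine le_trans ?_ (sum_harmonicWeight_truncatedInf_nonempty_le_one
    (𝒜 := ({j | f j = 1} : Finset α).image singleton) (by simp))
  refine sum_le_sum_of_subset_of_nonneg ?_ fun T _ _ ↦ harmonicWeight_nonneg T
  exact monotone_filter_right _ fun T _ ↦ truncatedInf_image_singleton_nonempty_of_sum_eq_one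

theorem exists_nonempty_card_filter_le_div_harmonic [Nonempty α] {ι : Type*} [Fintype ι]
    (p : ι → Finset α → Prop) [∀ i, DecidablePred (p i)]
    (hp : ∀ i, ∑ T with p i T, harmonicWeight T ≤ 1) :
    ∃ T : Finset α, T.Nonempty ∧
      (#{i | p i T} : ℚ) ≤ Fintype.card ι / harmonic (Fintype.card α) := by
  have hpos : 0 < harmonic (Fintype.card α) := harmonic_pos Fintype.card_ne_zero
  by_contra! hlarge
  have hlower : (Fintype.card ι : ℚ) < ∑ T : Finset α, harmonicWeight T * #{i | p i T} :=
    calc (Fintype.card ι : ℚ)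
        = ∑ T : Finset α, harmonicWeight T * (Fintype.card ι / harmonic (Fintype.card α)) := by
          rw [← sum_mul, sum_harmonicWeight, mul_div_cancel₀ _ hpos.ne']
      _ < ∑ T : Finset α, harmonicWeight T * #{i | p i T} := by
          refine sum_lt_sum (fun T _ ↦ ?_) ⟨univ, mem_univ _, ?_⟩
          · rcases T.eq_empty_or_nonempty with rfl | hT
            · simp only [harmonicWeight_empty, zero_mul, le_refl]
            · exact mul_le_mul_of_nonneg_left (hlarge T hT).le (harmonicWeight_nonneg T)
          · exact mul_lt_mul_of_pos_left (hlarge _ univ_nonempty)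
              (harmonicWeight_pos univ_nonempty)
  have hupper : ∑ T : Finset α, harmonicWeight T * #{i | p i T} ≤ Fintype.card ι :=
    calc ∑ T : Finset α, harmonicWeight T * #{i | p i T}
        = ∑ i, ∑ T with p i T, harmonicWeight T := by
          simp only [← sum_boole, mul_sum, mul_boole, sum_filter]
          exact sum_comm
      _ ≤ ∑ _i : ι, 1 := sum_le_sum fun i _ ↦ hp i
      _ = Fintype.card ι := by simp
  exact hlower.not_ge hupper

end HarmonicWeight

section OneFree

variable {m n : Type*}

/-- A set `S` of columns of `A` is 1-free if no row of `A` has sum `1` over `S`. The empty set is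
allowed here. -/
def IsOneFree (A : Matrix m n ℕ) (S : Finset n) : Prop :=
  ∀ i, ∑ c ∈ S, A i c ≠ 1

variable [Fintype m] [DecidableEq m]

theorem isOneFree_fromCols_one_disjSum (B : Matrix m n ℕ) (T : Finset n) :
    IsOneFree (Matrix.fromCols 1 B) (disjSum {i | ∑ j ∈ T, B i j = 1} T) := by
  intro i
  simp only [sum_disjSum, Matrix.fromCols_apply_inl, Matrix.fromCols_apply_inr, Matrix.one_apply,
    sum_ite_eq, mem_filter_univ]
  split_ifs <;> lia

theorem stmt_2_general [Fintype n] [Nonempty n] (B : Matrix m n ℕ) :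
    ∃ S : Finset (m ⊕ n), S.Nonempty ∧ IsOneFree (Matrix.fromCols 1 B) S ∧
      (#S : ℚ) ≤ Fintype.card m / harmonic (Fintype.card n) + Fintype.card n := by
  classical
  obtain ⟨T, hT, hcard⟩ := exists_nonempty_card_filter_le_div_harmonic
    (fun i T ↦ ∑ j ∈ T, B i j = 1) fun i ↦ sum_harmonicWeight_sum_eq_one_le_one (B i)
  refine ⟨disjSum {i | ∑ j ∈ T, B i j = 1} T, ?_, isOneFree_fromCols_one_disjSum B T, ?_⟩
  · exact hT.elim fun j hj ↦ ⟨.inr j, inr_mem_disjSum.2 hj⟩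
  · rw [card_disjSum, Nat.cast_add]
    exact add_le_add hcard (Nat.cast_le.2 (card_le_univ T))

end OneFree

/-- For all positive integers `n` and `k`, every binary `n × (n+k)` matrix of the form
`A = [Iₙ | B]` (columns indexed by `Fin n ⊕ Fin k`, with the first `n` columns forming the
identity matrix) has a nonempty 1-free set of at most `n / H_k + k` columns, where
`H_k = ∑_{ℓ=1}^k 1/ℓ` is the `k`-th harmonic number. -/
theorem stmt_2 (n k : ℕ) (hn : 0 < n) (hk : 0 < k)
    (B : Fin n → Fin k → ℕ) (hB : ∀ i j, B i j ≤ 1)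
    (A : Fin n → Fin n ⊕ Fin k → ℕ)
    (hA : ∀ i c, A i c =
      Sum.elim (fun j : Fin n => if i = j then (1 : ℕ) else 0) (fun j : Fin k => B i j) c) :
    ∃ S : Finset (Fin n ⊕ Fin k), S.Nonempty ∧
      (∀ i, ∑ c ∈ S, A i c ≠ 1) ∧
      (S.card : ℝ) ≤ (n : ℝ) / (∑ l ∈ Finset.Icc 1 k, (1 : ℝ) / l) + k := by
  have : Nonempty (Fin k) := ⟨⟨0, hk⟩⟩
  obtain rfl : A = Matrix.fromCols 1 B := by
    funext i c
    cases c <;> exact hA i _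
  obtain ⟨S, hS, hfree, hcard⟩ := stmt_2_general B
  refine ⟨S, hS, hfree, ?_⟩
  have hcard_real := (Rat.cast_le (K := ℝ)).2 hcard
  simpa only [Fintype.card_fin, harmonic_eq_sum_Icc, ← one_div, Rat.cast_add, Rat.cast_div,
    Rat.cast_sum, Rat.cast_one, Rat.cast_natCast] using hcard_real
end

section
/- For all integers k and j with 1 ≤ j ≤ k, the identity Σ_{i=1}^{k} j·C(k−j, i−1)/C(k−1, i−1) = k holds in the rational numbers, where C(a,b) denotes the binomial coefficient (with C(a,b) = 0 when b > a). -/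
/-!
Write `k = m + d + 1`, `j = d + 1` and `t = i - 1`. After multiplication by `C(m + d, m)`, the ratio
`C(m, t) / C(m + d, t)` becomes the single binomial coefficient `C(m + d - t, d)`. Summing over `t`
is then the hockey-stick identity, with total `C(m + d + 1, d + 1)`, which is
`(m + d + 1) / (d + 1)` times `C(m + d, m)`.
-/

open Finset

lemma add_choose_mul_choose (m d t : ℕ) :
    (m + d).choose m * m.choose t = (m + d).choose t * (m + d - t).choose d := by
  obtain htm | hmt := le_or_gt t m
  · rw [Nat.choose_mul htm, Nat.choose_symm_of_eq_add (by lia : m + d - t = m - t + d)]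
  · rw [Nat.choose_eq_zero_of_lt hmt, mul_zero]
    obtain htn | hnt := le_or_gt t (m + d)
    · rw [Nat.choose_eq_zero_of_lt (by lia : m + d - t < d), mul_zero]
    · rw [Nat.choose_eq_zero_of_lt hnt, zero_mul]

lemma sum_range_sub_choose (n d : ℕ) :
    ∑ t ∈ range (n + 1), (n - t).choose d = (n + 1).choose (d + 1) := by
  rw [sum_flip (fun t => t.choose d), ← Nat.sum_Icc_choose]
  refine (sum_subset (fun t ht => ?_) fun t ht htd => Nat.choose_eq_zero_of_lt ?_).symm
  · exact mem_range_succ_iff.mpr (mem_Icc.mp ht).2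
  · grind

section Semifield

variable {K : Type*} [Semifield K] [CharZero K]

lemma choose_div_add_choose {m d t : ℕ} (ht : t ≤ m + d) :
    (m.choose t : K) / (m + d).choose t = (m + d - t).choose d / (m + d).choose m := by
  have hm : ((m + d).choose m : K) ≠ 0 :=
    Nat.cast_ne_zero.mpr (Nat.choose_ne_zero (Nat.le_add_right m d))
  have ht' : ((m + d).choose t : K) ≠ 0 := Nat.cast_ne_zero.mpr (Nat.choose_ne_zero ht)
  rw [div_eq_div_iff ht' hm, mul_comm, mul_comm ((m + d - t).choose d : K)]
  exact_mod_cast add_choose_mul_choose m d t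

lemma sum_choose_div_add_choose (m d : ℕ) :
    ∑ t ∈ range (m + d + 1), (m.choose t : K) / (m + d).choose t = (m + d + 1) / (d + 1) := by
  have hm : ((m + d).choose m : K) ≠ 0 :=
    Nat.cast_ne_zero.mpr (Nat.choose_ne_zero (Nat.le_add_right m d))
  have absorption : ((m + d + 1).choose (d + 1) : K) * (d + 1) =
      (m + d + 1) * (m + d).choose m := by
    rw [Nat.choose_symm_add]
    exact_mod_cast (Nat.add_one_mul_choose_eq (m + d) d).symm
  calc ∑ t ∈ range (m + d + 1), (m.choose t : K) / (m + d).choose t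
      = ∑ t ∈ range (m + d + 1), ((m + d - t).choose d : K) / (m + d).choose m :=
        sum_congr rfl fun t ht => choose_div_add_choose (mem_range_succ_iff.mp ht)
    _ = (m + d + 1).choose (d + 1) / (m + d).choose m := by
        rw [← sum_div, ← Nat.cast_sum, sum_range_sub_choose]
    _ = (m + d + 1) / (d + 1) := by
        rwa [div_eq_div_iff hm d.cast_add_one_ne_zero]

theorem stmt_4_general (k j : ℕ) (hj : 1 ≤ j) (hjk : j ≤ k) :
    ∑ i ∈ Icc 1 k, (j : K) * (k - j).choose (i - 1) / (k - 1).choose (i - 1) = k := by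
  obtain ⟨d, rfl⟩ := Nat.exists_eq_add_of_le' hj
  obtain ⟨m, rfl⟩ := Nat.exists_eq_add_of_le' hjk
  have hd : (d + 1 : K) ≠ 0 := d.cast_add_one_ne_zero
  calc ∑ i ∈ Icc 1 (m + (d + 1)), ((d + 1 : ℕ) : K) * (m + (d + 1) - (d + 1)).choose (i - 1) /
          (m + (d + 1) - 1).choose (i - 1)
      = (d + 1) * ∑ t ∈ range (m + d + 1), (m.choose t : K) / (m + d).choose t := by
        rw [← Ico_add_one_right_eq_Icc, sum_Ico_eq_sum_range, mul_sum]
        simp [mul_div_assoc, add_assoc]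
    _ = (m + (d + 1) : ℕ) := by
        rw [sum_choose_div_add_choose, mul_div_cancel₀ _ hd]
        push_cast
        ring

end Semifield

/-- For all integers `k, j` with `1 ≤ j ≤ k`,
`∑_{i=1}^k j * C(k-j, i-1) / C(k-1, i-1) = k` holds in the rational numbers. -/
theorem stmt_4 (k j : ℕ) (hj : 1 ≤ j) (hjk : j ≤ k) :
    ∑ i ∈ Finset.Icc 1 k,
      (j : ℚ) * ((k - j).choose (i - 1) : ℚ) / ((k - 1).choose (i - 1) : ℚ) = k :=
  stmt_4_general k j hj hjk
end

section
/- For all positive integers m and k, every binary m×(m+k) matrix has a nonempty even set of at most (1 + 1/(2^k − 1))·(m+k)/2 columns. -/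
/-!
The sets of columns summing to zero modulo 2 are the supports of the vectors in the kernel `C` of
the matrix over `ZMod 2`, and `C` has at least `2 ^ k` elements. Every coordinate vanishes on at
least half of `C`, so the total weight of `C` is at most `|C| * (m + k) / 2`. This weight is carried
by the `|C| - 1` nonzero vectors only, and the lightest of them does not exceed their average: this
is Plotkin's bound for the code `C`, and it holds for additive codes over any finite group.
-/

open Finset
open scoped Matrix

section AddMonoidHom

variable {G H : Type*} [AddGroup G] [AddGroup H]

theorem card_le_card_ker_mul_card [Finite H] (f : G →+ H) :
    Nat.card G ≤ Nat.card f.ker * Nat.card H := by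
  rw [← f.ker.card_mul_index, AddSubgroup.index_ker]
  exact Nat.mul_le_mul_left _ f.range.card_le_card_addGroup

theorem card_filter_map_ne_zero_le [Fintype G] [Fintype H] [DecidableEq H] (f : G →+ H) :
    (#{g | f g ≠ 0} : ℝ) ≤ (1 - 1 / Fintype.card H) * Fintype.card G := by
  have card_ker : #{g | f g = 0} = Nat.card f.ker := by
    simp [← Fintype.card_subtype, Nat.card_eq_fintype_card, AddMonoidHom.mem_ker]
  have card_add : (#{g | f g = 0} : ℝ) + #{g | f g ≠ 0} = Fintype.card G := by
    exact_mod_cast card_filter_add_card_filter_not (s := univ) (f · = 0)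
  have card_le : (Fintype.card G : ℝ) ≤ #{g | f g = 0} * Fintype.card H := by
    rw [card_ker]
    simpa only [Nat.card_eq_fintype_card, Nat.cast_mul] using
      (Nat.cast_le (α := ℝ)).2 (card_le_card_ker_mul_card f)
  have div_le : (Fintype.card G : ℝ) / Fintype.card H ≤ #{g | f g = 0} :=
    (div_le_iff₀ (by exact_mod_cast Fintype.card_pos)).2 card_le
  calc (#{g | f g ≠ 0} : ℝ) ≤ Fintype.card G - Fintype.card G / Fintype.card H := by linarith
    _ = (1 - 1 / Fintype.card H) * Fintype.card G := by ring

end AddMonoidHom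

section AddSubgroup

variable {κ G : Type*} [Fintype κ] [AddGroup G] [Fintype G] [DecidableEq G]
  (C : AddSubgroup (κ → G)) [Fintype C]

theorem sum_hammingNorm_le :
    ∑ v : C, (hammingNorm (v : κ → G) : ℝ) ≤
      (1 - 1 / Fintype.card G) * Fintype.card κ * Fintype.card C := by
  have double_count : ∑ v : C, hammingNorm (v : κ → G) = ∑ j, #{v : C | (v : κ → G) j ≠ 0} := by
    simp only [hammingNorm, card_filter]
    exact sum_comm
  calc ∑ v : C, (hammingNorm (v : κ → G) : ℝ)
      = ∑ j, (#{v : C | (v : κ → G) j ≠ 0} : ℝ) := by exact_mod_cast double_count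
    _ ≤ ∑ _j : κ, (1 - 1 / Fintype.card G : ℝ) * Fintype.card C :=
        sum_le_sum fun j _ ↦
          card_filter_map_ne_zero_le ((Pi.evalAddMonoidHom (fun _ ↦ G) j).comp C.subtype)
    _ = (1 - 1 / Fintype.card G) * Fintype.card κ * Fintype.card C := by
        rw [sum_const, nsmul_eq_mul, card_univ]
        ring

theorem exists_ne_zero_hammingNorm_le [Nontrivial C] :
    ∃ v ∈ C, v ≠ 0 ∧ (hammingNorm v : ℝ) ≤
      (1 - 1 / Fintype.card G) * Fintype.card κ * (1 + 1 / (Fintype.card C - 1)) := by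
  classical
  have card_gt : (1 : ℝ) < Fintype.card C := by exact_mod_cast Fintype.one_lt_card
  have card_erase : (#(univ.erase (0 : C)) : ℝ) = Fintype.card C - 1 := by
    rw [cast_card_erase_of_mem (mem_univ _), card_univ]
  have sum_le_card_smul : ∑ v ∈ univ.erase (0 : C), (hammingNorm (v : κ → G) : ℝ) ≤
      #(univ.erase (0 : C)) •
        ((1 - 1 / Fintype.card G) * Fintype.card κ * (1 + 1 / (Fintype.card C - 1)) : ℝ) :=
    calc ∑ v ∈ univ.erase (0 : C), (hammingNorm (v : κ → G) : ℝ)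
        = ∑ v : C, (hammingNorm (v : κ → G) : ℝ) := sum_erase _ (by simp)
      _ ≤ (1 - 1 / Fintype.card G) * Fintype.card κ * Fintype.card C := sum_hammingNorm_le C
      _ = _ := by
          have : (Fintype.card C - 1 : ℝ) ≠ 0 := by linarith
          rw [nsmul_eq_mul, card_erase]
          field_simp
          ring
  have erase_nonempty : (univ.erase (0 : C)).Nonempty :=
    (exists_ne (0 : C)).imp fun v hv ↦ mem_erase.2 ⟨hv, mem_univ v⟩
  obtain ⟨v, hv, hle⟩ :=
    exists_le_of_sum_le erase_nonempty (sum_le_card_smul.trans_eq (sum_const _).symm)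
  exact ⟨v, v.2, by simpa using ne_of_mem_erase hv, hle⟩

end AddSubgroup

section Matrix

variable {ι κ : Type*} [Fintype κ]

theorem mulVec_eq_sum_filter_ne_zero (M : Matrix ι κ (ZMod 2)) (v : κ → ZMod 2) (i : ι) :
    (M *ᵥ v) i = ∑ j with v j ≠ 0, M i j := by
  have mul_eq_ite : ∀ a b : ZMod 2, a * b = if b ≠ 0 then a else 0 := by decide
  simp only [Matrix.mulVec, dotProduct, mul_eq_ite, sum_filter]

variable [Fintype ι]

theorem pow_le_card_ker_mulVecLin {R : Type*} [CommRing R] [Finite R] (M : Matrix ι κ R) {k : ℕ}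
    (hcard : Fintype.card ι + k ≤ Fintype.card κ) :
    Nat.card R ^ k ≤ Nat.card M.mulVecLin.toAddMonoidHom.ker := by
  refine Nat.le_of_mul_le_mul_right ?_ (pow_pos Nat.card_pos (Fintype.card ι) : 0 < Nat.card R ^ _)
  calc Nat.card R ^ k * Nat.card R ^ Fintype.card ι
      = Nat.card R ^ (Fintype.card ι + k) := by rw [add_comm, pow_add]
    _ ≤ Nat.card R ^ Fintype.card κ := Nat.pow_le_pow_right Nat.card_pos hcard
    _ = Nat.card (κ → R) := by rw [Nat.card_fun, Nat.card_eq_fintype_card (α := κ)]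
    _ ≤ Nat.card M.mulVecLin.toAddMonoidHom.ker * Nat.card (ι → R) := card_le_card_ker_mul_card _
    _ = Nat.card M.mulVecLin.toAddMonoidHom.ker * Nat.card R ^ Fintype.card ι := by
        rw [Nat.card_fun, Nat.card_eq_fintype_card (α := ι)]

theorem exists_ne_zero_mulVec_eq_zero_hammingNorm_le {R : Type*} [CommRing R] [Nontrivial R]
    [Fintype R] [DecidableEq R] (M : Matrix ι κ R) {k : ℕ} (hk : 0 < k)
    (hcard : Fintype.card ι + k ≤ Fintype.card κ) :
    ∃ v, v ≠ 0 ∧ M *ᵥ v = 0 ∧ (hammingNorm v : ℝ) ≤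
      (1 - 1 / Fintype.card R) * Fintype.card κ * (1 + 1 / (Fintype.card R ^ k - 1)) := by
  classical
  let C := M.mulVecLin.toAddMonoidHom.ker
  have : Fintype C := Fintype.ofFinite C
  have pow_le : Fintype.card R ^ k ≤ Fintype.card C := by
    simpa only [Nat.card_eq_fintype_card] using pow_le_card_ker_mulVecLin M hcard
  have one_lt_pow : 1 < Fintype.card R ^ k := Nat.one_lt_pow hk.ne' Fintype.one_lt_card
  have : Nontrivial C := Fintype.one_lt_card_iff_nontrivial.1 (one_lt_pow.trans_le pow_le)
  obtain ⟨v, hvC, hv0, hv⟩ := exists_ne_zero_hammingNorm_le C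
  refine ⟨v, hv0, hvC, hv.trans ?_⟩
  have pow_sub_pos : (0 : ℝ) < Fintype.card R ^ k - 1 := sub_pos.2 (by exact_mod_cast one_lt_pow)
  have pow_le_real : (Fintype.card R : ℝ) ^ k ≤ Fintype.card C := by exact_mod_cast pow_le
  have fraction_nonneg : (0 : ℝ) ≤ 1 - 1 / Fintype.card R :=
    sub_nonneg.2 (div_le_one_of_le₀ (by exact_mod_cast Fintype.card_pos) (Nat.cast_nonneg _))
  gcongr

theorem stmt_5_general (A : Matrix ι κ ℤ) {k : ℕ} (hk : 0 < k)
    (hcard : Fintype.card ι + k ≤ Fintype.card κ) :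
    ∃ S : Finset κ, S.Nonempty ∧ (∀ i, Even (∑ j ∈ S, A i j)) ∧
      (#S : ℝ) ≤ (1 + 1 / (2 ^ k - 1)) * (Fintype.card κ / 2) := by
  obtain ⟨v, hv0, hAv, hv⟩ :=
    exists_ne_zero_mulVec_eq_zero_hammingNorm_le (A.map (Int.cast : ℤ → ZMod 2)) hk hcard
  refine ⟨({j | v j ≠ 0} : Finset κ), ?_, fun i ↦ ?_, hv.trans_eq ?_⟩
  · obtain ⟨j, hj⟩ := Function.ne_iff.1 hv0
    exact ⟨j, by simpa using hj⟩
  · rw [← ZMod.intCast_eq_zero_iff_even, Int.cast_sum]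
    exact (mulVec_eq_sum_filter_ne_zero _ v i).symm.trans (congrFun hAv i)
  · rw [ZMod.card, Nat.cast_ofNat]
    ring

end Matrix

/-- For all positive integers `m` and `k`, every binary `m × (m+k)` matrix has a nonempty
even set of at most `(1 + 1/(2^k - 1)) * (m+k)/2` columns. -/
theorem stmt_5 (m k : ℕ) (hm : 0 < m) (hk : 0 < k)
    (A : Fin m → Fin (m + k) → ℕ) (hA : ∀ i j, A i j ≤ 1) :
    ∃ S : Finset (Fin (m + k)), S.Nonempty ∧
      (∀ i, Even (∑ j ∈ S, A i j)) ∧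
      (S.card : ℝ) ≤ (1 + 1 / (2 ^ k - 1)) * ((m + k) / 2) := by
  obtain ⟨S, hS, hEven, hle⟩ := stmt_5_general (fun i j ↦ (A i j : ℤ)) hk (by simp)
  exact ⟨S, hS, fun i ↦ by exact_mod_cast hEven i, by simpa using hle⟩
end

section
/- For all integers k ≥ 2 and m ≥ 1, u((2^k−1)m − k, (2^k−1)m) = ε((2^k−1)m − k, (2^k−1)m) = 2^{k−1}·m, where u and ε denote the maximum stopping distance and maximum distance over all binary matrices of the given dimensions. -/
/-!
The upper bound is Plotkin's averaging argument: a matrix with `n = (2 ^ k - 1) m` columns and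
`n - k` rows is the parity check matrix of a code with at least `2 ^ k` words, and every coordinate
vanishes on at least half of them.

The lower bound for 1-free sets comes from parity checks for the `m`-fold repeated simplex code,
built by induction on `k`: from a system of checks on a set `C` of columns, form two copies of `C`
and `m` new columns that are tied together, and check each column against its copy and a new column.
If a 1-free set `S` contains the new columns, it meets each of the `|C|` pairs of copies, so
`|S| ≥ |C| + m`; otherwise `S` consists of two copies of a 1-free set of the smaller system.
-/

/-- The stopping distance of a binary matrix `A`: the minimum cardinality of a nonempty
1-free set of columns of `A` (a set of columns is 1-free if no row sums to exactly `1`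
over that set). -/
noncomputable def stoppingDistance {m n : ℕ} (A : Fin m → Fin n → ℕ) : ℕ :=
  sInf {c | ∃ S : Finset (Fin n), S.Nonempty ∧ (∀ i, ∑ j ∈ S, A i j ≠ 1) ∧ S.card = c}

/-- The distance of (the code with parity-check matrix) a binary matrix `A`: the minimum
cardinality of a nonempty even set of columns of `A`. -/
noncomputable def codeDistance {m n : ℕ} (A : Fin m → Fin n → ℕ) : ℕ :=
  sInf {c | ∃ S : Finset (Fin n), S.Nonempty ∧ (∀ i, Even (∑ j ∈ S, A i j)) ∧ S.card = c}

/-- `u m n`: the maximum stopping distance over all `m × n` binary matrices. -/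
noncomputable def maxStoppingDistance (m n : ℕ) : ℕ :=
  sSup {d | ∃ A : Fin m → Fin n → ℕ, (∀ i j, A i j ≤ 1) ∧ stoppingDistance A = d}

/-- `ε m n`: the maximum distance over all `m × n` binary matrices. -/
noncomputable def maxCodeDistance (m n : ℕ) : ℕ :=
  sSup {d | ∃ A : Fin m → Fin n → ℕ, (∀ i j, A i j ≤ 1) ∧ codeDistance A = d}

open Finset

section Plotkin

theorem card_le_card_mul_card_ker {G H : Type*} [AddGroup G] [AddGroup H] [Finite H]
    (φ : G →+ H) : Nat.card G ≤ Nat.card H * Nat.card φ.ker := by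
  rw [← φ.ker.index_mul_card, AddSubgroup.index_ker]
  exact Nat.mul_le_mul_right _ (Nat.card_le_card_of_injective _ Subtype.val_injective)

theorem card_mul_card_ne_zero_le {G H : Type*} [AddGroup G] [Fintype G] [AddGroup H] [Fintype H]
    [DecidableEq H] (φ : G →+ H) :
    Fintype.card H * #{g | φ g ≠ 0} ≤ (Fintype.card H - 1) * Fintype.card G := by
  have hsplit : Fintype.card H * #{g | φ g = 0} + Fintype.card H * #{g | φ g ≠ 0} =
      Fintype.card H * Fintype.card G := by
    rw [← mul_add, card_filter_add_card_filter_not, card_univ]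
  have hker : Fintype.card G ≤ Fintype.card H * #{g | φ g = 0} := by
    simpa only [Nat.card_eq_fintype_card, ← Fintype.card_subtype, AddMonoidHom.mem_ker]
      using card_le_card_mul_card_ker φ
  rw [Nat.sub_mul, one_mul]
  omega

theorem plotkin_bound {ι H : Type*} [Fintype ι] [AddGroup H] [Fintype H] [DecidableEq H]
    (C : AddSubgroup (ι → H)) {d : ℕ} (hd : ∀ v ∈ C, v ≠ 0 → d ≤ hammingNorm v) :
    Fintype.card H * (d * (Nat.card C - 1)) ≤
      (Fintype.card H - 1) * (Fintype.card ι * Nat.card C) := by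
  classical
  have := Fintype.ofFinite C
  have hwords : d * (Nat.card C - 1) ≤ ∑ v : C, hammingNorm (v : ι → H) := by
    calc d * (Nat.card C - 1) = ∑ _v ∈ univ.erase (0 : C), d := by
          simp [mul_comm]
      _ ≤ ∑ v ∈ univ.erase (0 : C), hammingNorm (v : ι → H) :=
          sum_le_sum fun v hv => hd v v.2 (by simpa using hv)
      _ ≤ ∑ v : C, hammingNorm (v : ι → H) := sum_le_sum_of_subset (erase_subset _ _)
  have hcount : ∑ v : C, hammingNorm (v : ι → H) = ∑ j, #{v : C | v.1 j ≠ 0} :=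
    sum_card_bipartiteAbove_eq_sum_card_bipartiteBelow fun (v : C) j => v.1 j ≠ 0
  have hcoord (j : ι) :
      Fintype.card H * #{v : C | v.1 j ≠ 0} ≤ (Fintype.card H - 1) * Fintype.card C :=
    card_mul_card_ne_zero_le ((Pi.evalAddMonoidHom (fun _ => H) j).comp C.subtype)
  calc Fintype.card H * (d * (Nat.card C - 1))
      ≤ Fintype.card H * ∑ j, #{v : C | v.1 j ≠ 0} := Nat.mul_le_mul_left _ (hcount ▸ hwords)
    _ = ∑ j, Fintype.card H * #{v : C | v.1 j ≠ 0} := mul_sum _ _ _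
    _ ≤ ∑ _j : ι, (Fintype.card H - 1) * Fintype.card C := sum_le_sum fun j _ => hcoord j
    _ = (Fintype.card H - 1) * (Fintype.card ι * Nat.card C) := by
        rw [sum_const, card_univ, smul_eq_mul, Nat.card_eq_fintype_card]
        ring

theorem mul_sub_one_le_mul_of_le {a b M N : ℕ} (hMN : M ≤ N) (h : a * (N - 1) ≤ b * N) :
    a * (M - 1) ≤ b * M := by
  rcases M with _ | M
  · simp
  obtain ⟨N, rfl⟩ : ∃ N', N = N' + 1 := ⟨N - 1, by omega⟩
  simp only [Nat.add_sub_cancel] at h ⊢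
  refine Nat.le_of_mul_le_mul_right (c := N + 1) ?_ N.succ_pos
  calc a * M * (N + 1) ≤ a * N * (M + 1) := by
        simp only [mul_assoc]
        exact Nat.mul_le_mul_left _ (by linarith)
    _ ≤ b * (N + 1) * (M + 1) := Nat.mul_le_mul_right _ h
    _ = b * (M + 1) * (N + 1) := mul_right_comm _ _ _

end Plotkin

section ParityCheck

variable {m n : ℕ}

/-- The binary code with parity check matrix `A`: the kernel of the syndrome map
`v ↦ A v` over `ZMod 2`. -/
def parityCheckCode (A : Fin m → Fin n → ℕ) : AddSubgroup (Fin n → ZMod 2) :=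
  (Matrix.of fun i j => (A i j : ZMod 2)).mulVecLin.toAddMonoidHom.ker

theorem two_pow_sub_le_card_parityCheckCode (A : Fin m → Fin n → ℕ) :
    2 ^ (n - m) ≤ Nat.card (parityCheckCode A) := by
  have h : 2 ^ n ≤ 2 ^ m * Nat.card (parityCheckCode A) := by
    have hker := card_le_card_mul_card_ker
      (Matrix.of fun i j => (A i j : ZMod 2)).mulVecLin.toAddMonoidHom
    rwa [Nat.card_fun, Nat.card_fun, Nat.card_zmod, Nat.card_fin, Nat.card_fin] at hker
  rcases le_total m n with hmn | hnm
  · refine Nat.le_of_mul_le_mul_left (?_ : 2 ^ m * _ ≤ _) (Nat.two_pow_pos m)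
    rwa [← pow_add, Nat.add_sub_cancel' hmn]
  · rw [Nat.sub_eq_zero_of_le hnm]
    exact Nat.card_pos

theorem even_sum_support_of_mem_parityCheckCode {A : Fin m → Fin n → ℕ} {v : Fin n → ZMod 2}
    (hv : v ∈ parityCheckCode A) (i : Fin m) : Even (∑ j with v j ≠ 0, A i j) := by
  have hsyndrome : ∑ j, (A i j : ZMod 2) * v j = 0 := congrFun hv i
  rw [← ZMod.natCast_eq_zero_iff_even, Nat.cast_sum, sum_filter]
  refine Eq.trans ?_ hsyndrome
  refine sum_congr rfl fun j _ => ?_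
  rcases (by decide : ∀ a : ZMod 2, a = 0 ∨ a = 1) (v j) with h | h <;> simp [h]

theorem codeDistance_le_hammingNorm {A : Fin m → Fin n → ℕ} {v : Fin n → ZMod 2}
    (hv : v ∈ parityCheckCode A) (hv0 : v ≠ 0) : codeDistance A ≤ hammingNorm v :=
  Nat.sInf_le ⟨_, card_pos.mp (hammingNorm_pos_iff.mpr hv0),
    even_sum_support_of_mem_parityCheckCode hv, rfl⟩

theorem two_mul_codeDistance_mul_le (A : Fin m → Fin n → ℕ) :
    2 * codeDistance A * (2 ^ (n - m) - 1) ≤ n * 2 ^ (n - m) := by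
  refine mul_sub_one_le_mul_of_le (two_pow_sub_le_card_parityCheckCode A) ?_
  simpa [mul_assoc] using
    plotkin_bound (parityCheckCode A) fun v hv hv0 => codeDistance_le_hammingNorm hv hv0

theorem exists_nonempty_even (hmn : m < n) (A : Fin m → Fin n → ℕ) :
    ∃ S : Finset (Fin n), S.Nonempty ∧ ∀ i, Even (∑ j ∈ S, A i j) := by
  have hcard : 1 < Nat.card (parityCheckCode A) :=
    (Nat.one_lt_two_pow (Nat.sub_ne_zero_of_lt hmn)).trans_le
      (two_pow_sub_le_card_parityCheckCode A)
  obtain ⟨⟨v, hv⟩, hv0⟩ := AddSubgroup.ne_bot_iff_exists_ne_zero.mp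
    ((parityCheckCode A).one_lt_card_iff_ne_bot.mp hcard)
  exact ⟨_, card_pos.mp (hammingNorm_pos_iff.mpr fun h => hv0 (Subtype.ext h)),
    even_sum_support_of_mem_parityCheckCode hv⟩

theorem ne_one_of_even {a : ℕ} (ha : Even a) : a ≠ 1 := by
  rintro rfl
  exact Nat.not_even_one ha

theorem stoppingDistance_le_codeDistance (hmn : m < n) (A : Fin m → Fin n → ℕ) :
    stoppingDistance A ≤ codeDistance A := by
  obtain ⟨S, hS, heven⟩ := exists_nonempty_even hmn A
  refine le_csInf ⟨_, S, hS, heven, rfl⟩ ?_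
  rintro _ ⟨T, hT, hTeven, rfl⟩
  exact Nat.sInf_le ⟨T, hT, fun i => ne_one_of_even (hTeven i), rfl⟩

theorem le_stoppingDistance (hmn : m < n) {A : Fin m → Fin n → ℕ} {d : ℕ}
    (h : ∀ S : Finset (Fin n), S.Nonempty → (∀ i, ∑ j ∈ S, A i j ≠ 1) → d ≤ #S) :
    d ≤ stoppingDistance A := by
  obtain ⟨S, hS, heven⟩ := exists_nonempty_even hmn A
  refine le_csInf ⟨_, S, hS, fun i => ne_one_of_even (heven i), rfl⟩ ?_
  rintro _ ⟨T, hT, hTfree, rfl⟩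
  exact h T hT hTfree

theorem maxStoppingDistance_eq_and_maxCodeDistance_eq (hmn : m < n) {d : ℕ}
    (hupper : ∀ A : Fin m → Fin n → ℕ, codeDistance A ≤ d)
    (hlower : ∃ A : Fin m → Fin n → ℕ, (∀ i j, A i j ≤ 1) ∧ d ≤ stoppingDistance A) :
    maxStoppingDistance m n = d ∧ maxCodeDistance m n = d := by
  have hle := stoppingDistance_le_codeDistance hmn
  obtain ⟨A, hA, hd⟩ := hlower
  constructor
  · refine IsGreatest.csSup_eq ⟨⟨A, hA, ((hle A).trans (hupper A)).antisymm hd⟩, ?_⟩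
    rintro _ ⟨B, _, rfl⟩
    exact (hle B).trans (hupper B)
  · refine IsGreatest.csSup_eq ⟨⟨A, hA, (hupper A).antisymm (hd.trans (hle A))⟩, ?_⟩
    rintro _ ⟨B, _, rfl⟩
    exact hupper B

end ParityCheck

section StoppingSet

variable {R C : Type*}

/-- `S` is a stopping set of the incidence relation `A` between rows and columns if no row is
incident to exactly one column in `S`. For the incidence relation of the ones of a binary matrix,
the stopping sets are the 1-free sets of columns. -/
def IsStoppingSet (A : R → C → Prop) (S : Finset C) : Prop :=
  ∀ i, ∀ x ∈ S, A i x → ∃ y ∈ S, A i y ∧ y ≠ x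

theorem IsStoppingSet.map {R' C' : Type*} {A : R → C → Prop} {e : R' ≃ R} {f : C' ≃ C}
    {S : Finset C'} (hS : IsStoppingSet (fun i j => A (e i) (f j)) S) :
    IsStoppingSet A (S.map f.toEmbedding) := by
  intro i x hx hix
  obtain ⟨y, hy, hiy, hne⟩ := hS (e.symm i) (f.symm x) (by simpa using hx) (by simpa using hix)
  exact ⟨f y, by simpa using hy, by simpa using hiy, by rwa [ne_eq, ← f.eq_symm_apply]⟩

theorem isStoppingSet_of_sum_ne_one {A : R → C → Prop} [∀ i j, Decidable (A i j)] {S : Finset C}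
    (hS : ∀ i, ∑ j ∈ S, (if A i j then 1 else 0) ≠ 1) : IsStoppingSet A S := by
  intro i x hx hix
  have hcard : #{j ∈ S | A i j} ≠ 1 := by simpa using hS i
  have hpos : 0 < #{j ∈ S | A i j} := card_pos.mpr ⟨x, by simp [hx, hix]⟩
  obtain ⟨y, hy, hne⟩ := exists_mem_ne (by omega : 1 < #{j ∈ S | A i j}) x
  exact ⟨y, (mem_filter.mp hy).1, (mem_filter.mp hy).2, hne⟩

/-- The step from the simplex code of dimension `k` to that of dimension `k + 1`, with every
column repeated `|I| + 1` times. The columns are two copies of the columns of `A` and new columns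
`Option I`. The rows are the rows of `A` on the first copy, for each `y : C` a check on the two
copies of `y` and the new column `none`, and for each `j : I` a check tying `some j` to `none`. -/
def doubling (A : R → C → Prop) (I : Type*) : R ⊕ C ⊕ I → C ⊕ C ⊕ Option I → Prop
  | .inl i, .inl x => A i x
  | .inr (.inl y), .inl x => x = y
  | .inr (.inl y), .inr (.inl x) => x = y
  | .inr (.inl _), .inr (.inr t) => t = none
  | .inr (.inr j), .inr (.inr t) => t = none ∨ t = some j
  | _, _ => False

namespace IsStoppingSet

variable {A : R → C → Prop} {I : Type*} {S : Finset (C ⊕ C ⊕ Option I)}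

theorem toLeft_doubling (hS : IsStoppingSet (doubling A I) S) : IsStoppingSet A S.toLeft := by
  intro i x hx hix
  obtain ⟨y | y | t, hy, hiy, hne⟩ := hS (.inl i) (.inl x) (mem_toLeft.mp hx) hix
  · exact ⟨y, mem_toLeft.mpr hy, hiy, by simpa using hne⟩
  · exact hiy.elim
  · exact hiy.elim

theorem inr_inr_some_mem_iff (hS : IsStoppingSet (doubling A I) S) (j : I) :
    .inr (.inr (some j)) ∈ S ↔ .inr (.inr none) ∈ S := by
  constructor
  · intro h
    obtain ⟨y | y | t, hy, hiy, hne⟩ := hS (.inr (.inr j)) _ h (.inr rfl) <;>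
      simp_all [doubling]
  · intro h
    obtain ⟨y | y | t, hy, hiy, hne⟩ := hS (.inr (.inr j)) _ h (.inl rfl) <;>
      simp_all [doubling]

theorem inl_mem_or_inr_inl_mem (hS : IsStoppingSet (doubling A I) S)
    (hnone : .inr (.inr none) ∈ S) (y : C) : .inl y ∈ S ∨ .inr (.inl y) ∈ S := by
  obtain ⟨x | x | t, hx, hix, hne⟩ := hS (.inr (.inl y)) _ hnone rfl <;>
    simp_all [doubling]

theorem inl_mem_iff_inr_inl_mem (hS : IsStoppingSet (doubling A I) S)
    (hnone : .inr (.inr none) ∉ S) (y : C) : .inl y ∈ S ↔ .inr (.inl y) ∈ S := by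
  constructor
  · intro h
    obtain ⟨x | x | t, hx, hix, hne⟩ := hS (.inr (.inl y)) _ h rfl <;>
      simp_all [doubling]
  · intro h
    obtain ⟨x | x | t, hx, hix, hne⟩ := hS (.inr (.inl y)) _ h rfl <;>
      simp_all [doubling]

theorem card_add_card_le_of_none_mem [Fintype C] [Fintype I]
    (hS : IsStoppingSet (doubling A I) S) (hnone : .inr (.inr none) ∈ S) :
    Fintype.card C + (Fintype.card I + 1) ≤ #S := by
  classical
  have hcopies : S.toLeft ∪ S.toRight.toLeft = univ :=
    eq_univ_of_forall fun y => by simpa using hS.inl_mem_or_inr_inl_mem hnone y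
  have hnew : S.toRight.toRight = univ := by
    refine eq_univ_of_forall fun t => ?_
    cases t <;> simp [hS.inr_inr_some_mem_iff, hnone]
  calc Fintype.card C + (Fintype.card I + 1)
      = #(S.toLeft ∪ S.toRight.toLeft) + #S.toRight.toRight := by
        rw [hcopies, hnew, card_univ, card_univ, Fintype.card_option]
    _ ≤ #S.toLeft + #S.toRight.toLeft + #S.toRight.toRight :=
        Nat.add_le_add_right (card_union_le _ _) _
    _ = #S := by
        rw [add_assoc, card_toLeft_add_card_toRight, card_toLeft_add_card_toRight]

theorem card_eq_two_mul_of_none_notMem (hS : IsStoppingSet (doubling A I) S)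
    (hnone : .inr (.inr none) ∉ S) : #S = 2 * #S.toLeft := by
  have hcopies : S.toRight.toLeft = S.toLeft := by
    ext y
    simpa using (hS.inl_mem_iff_inr_inl_mem hnone y).symm
  have hnew : S.toRight.toRight = ∅ := by
    refine eq_empty_of_forall_notMem fun t => ?_
    cases t <;> simp [hS.inr_inr_some_mem_iff, hnone]
  rw [← card_toLeft_add_card_toRight (u := S), ← card_toLeft_add_card_toRight (u := S.toRight),
    hcopies, hnew, card_empty, add_zero, two_mul]

theorem card_doubling [Fintype C] [Fintype I] (hS : IsStoppingSet (doubling A I) S)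
    (hne : S.Nonempty) :
    Fintype.card C + (Fintype.card I + 1) ≤ #S ∨
      ∃ T : Finset C, T.Nonempty ∧ IsStoppingSet A T ∧ #S = 2 * #T := by
  by_cases hnone : .inr (.inr none) ∈ S
  · exact .inl (hS.card_add_card_le_of_none_mem hnone)
  · have hcard := hS.card_eq_two_mul_of_none_notMem hnone
    have hpos := hne.card_pos
    exact .inr ⟨S.toLeft, card_pos.mp (by omega), hS.toLeft_doubling, hcard⟩

end IsStoppingSet

-- Bounding `2 * #S` instead of `#S` lets the induction start from the empty system at `k = 0`.
theorem exists_forall_isStoppingSet_two_pow_mul_le (k : ℕ) {m : ℕ} (hm : 1 ≤ m) :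
    ∃ (R C : Type) (_ : Fintype R) (_ : Fintype C) (A : R → C → Prop),
      Fintype.card R + k = Fintype.card C ∧ Fintype.card C + m = 2 ^ k * m ∧
        ∀ S : Finset C, S.Nonempty → IsStoppingSet A S → 2 ^ k * m ≤ 2 * #S := by
  induction k with
  | zero =>
    refine ⟨Empty, Empty, inferInstance, inferInstance, fun _ _ => False, by simp, by simp, ?_⟩
    rintro S ⟨x, _⟩
    exact x.elim
  | succ k ih =>
    obtain ⟨R, C, _, _, A, hR, hC, hA⟩ := ih
    refine ⟨R ⊕ C ⊕ Fin (m - 1), C ⊕ C ⊕ Option (Fin (m - 1)), inferInstance, inferInstance,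
      doubling A _, ?_, ?_, fun S hne hS => ?_⟩
    · simp only [Fintype.card_sum, Fintype.card_option, Fintype.card_fin]
      omega
    · simp only [Fintype.card_sum, Fintype.card_option, Fintype.card_fin, pow_succ', mul_assoc]
      omega
    · rw [pow_succ', mul_assoc]
      rcases hS.card_doubling hne with hcard | ⟨T, hT, hTstopping, hcard⟩
      · rw [Fintype.card_fin] at hcard
        omega
      · have := hA T hT hTstopping
        omega

theorem exists_binary_le_stoppingDistance [Fintype R] [Fintype C] {r n d : ℕ}
    (hR : Fintype.card R = r) (hC : Fintype.card C = n) (hrn : r < n) {A : R → C → Prop}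
    (hA : ∀ S : Finset C, S.Nonempty → IsStoppingSet A S → d ≤ #S) :
    ∃ B : Fin r → Fin n → ℕ, (∀ i j, B i j ≤ 1) ∧ d ≤ stoppingDistance B := by
  classical
  let e := (Fintype.equivFinOfCardEq hR).symm
  let f := (Fintype.equivFinOfCardEq hC).symm
  refine ⟨fun i j => if A (e i) (f j) then 1 else 0, fun i j => by dsimp only; split_ifs <;> simp,
    le_stoppingDistance hrn fun S hne hS => ?_⟩
  have hstopping : IsStoppingSet (fun i j => A (e i) (f j)) S := isStoppingSet_of_sum_ne_one hS
  simpa using hA _ (hne.map (f := f.toEmbedding)) hstopping.map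

end StoppingSet

section Simplex

variable {k m : ℕ}

theorem le_two_pow_sub_one_mul (hm : 1 ≤ m) : k ≤ (2 ^ k - 1) * m :=
  (Nat.le_sub_one_of_lt Nat.lt_two_pow_self).trans (Nat.le_mul_of_pos_right _ hm)

theorem codeDistance_le_two_pow_mul (hk : 1 ≤ k) (hm : 1 ≤ m)
    (A : Fin ((2 ^ k - 1) * m - k) → Fin ((2 ^ k - 1) * m) → ℕ) :
    codeDistance A ≤ 2 ^ (k - 1) * m := by
  have hplotkin := two_mul_codeDistance_mul_le A
  rw [Nat.sub_sub_self (le_two_pow_sub_one_mul hm)] at hplotkin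
  have hpos : 0 < 2 * (2 ^ k - 1) := by
    have := Nat.one_lt_two_pow (n := k) (by omega)
    omega
  refine Nat.le_of_mul_le_mul_left ?_ hpos
  calc 2 * (2 ^ k - 1) * codeDistance A = 2 * codeDistance A * (2 ^ k - 1) := by ring
    _ ≤ (2 ^ k - 1) * m * 2 ^ k := hplotkin
    _ = 2 * (2 ^ k - 1) * (2 ^ (k - 1) * m) := by
        rw [← mul_pow_sub_one (by omega : k ≠ 0) 2]
        ring

theorem exists_binary_two_pow_mul_le_stoppingDistance (hk : 1 ≤ k) (hm : 1 ≤ m) :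
    ∃ A : Fin ((2 ^ k - 1) * m - k) → Fin ((2 ^ k - 1) * m) → ℕ,
      (∀ i j, A i j ≤ 1) ∧ 2 ^ (k - 1) * m ≤ stoppingDistance A := by
  obtain ⟨R, C, _, _, A, hR, hC, hA⟩ := exists_forall_isStoppingSet_two_pow_mul_le k hm
  have hC' : Fintype.card C = (2 ^ k - 1) * m := by
    rw [Nat.sub_mul, one_mul, ← hC, Nat.add_sub_cancel]
  have hR' : Fintype.card R = (2 ^ k - 1) * m - k := by omega
  refine exists_binary_le_stoppingDistance (A := A) hR' hC' (by omega) fun S hne hS => ?_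
  have hbound := hA S hne hS
  rw [← mul_pow_sub_one (by omega : k ≠ 0) 2, mul_assoc] at hbound
  exact Nat.le_of_mul_le_mul_left hbound two_pos

end Simplex

/-- For all integers `k ≥ 2` and `m ≥ 1`,
`u((2^k−1)m − k, (2^k−1)m) = ε((2^k−1)m − k, (2^k−1)m) = 2^(k−1) * m`. -/
theorem stmt_9 (k m : ℕ) (hk : 2 ≤ k) (hm : 1 ≤ m) :
    maxStoppingDistance ((2 ^ k - 1) * m - k) ((2 ^ k - 1) * m) = 2 ^ (k - 1) * m ∧
    maxCodeDistance ((2 ^ k - 1) * m - k) ((2 ^ k - 1) * m) = 2 ^ (k - 1) * m := by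
  have hk' : 1 ≤ k := by omega
  have hkn : k ≤ (2 ^ k - 1) * m := le_two_pow_sub_one_mul hm
  exact maxStoppingDistance_eq_and_maxCodeDistance_eq (by omega)
    (codeDistance_le_two_pow_mul hk' hm) (exists_binary_two_pow_mul_le_stoppingDistance hk' hm)
end

section
/- Every 4×8 binary matrix has a nonempty 1-free set of at most 3 columns. -/
/-!
Read the columns as vectors over `ZMod 2`; none is zero and no two are equal, since otherwise one or
two columns already do. The 1-free triples of vectors are then the triples `t + p`, `t + q`,
`t + p + q` with `p ≠ q` nonzero and `t` of support disjoint from those of `p` and `q`. Taking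
`t = 0`, we may assume that no column is the sum of two others. As they make up at least half of the
group, the columns are then the complement of a subgroup `H` of index two. Some standard basis
vector `t` lies outside `H`, and the elements of `H` vanishing on the support of `t` form a subgroup
of index at most four, which contains suitable `p` and `q` when there are at least four rows.
-/

open Finset

/-- A sum-free set in an additive group: it contains no sum of two of its elements, equal or not. -/
def IsSumFree {G : Type*} [Add G] (S : Finset G) : Prop :=
  ∀ a ∈ S, ∀ b ∈ S, a + b ∉ S

namespace IsSumFree

variable {G : Type*} [AddGroup G] [Fintype G] {S : Finset G}

theorem add_mem_iff_notMem (hS : IsSumFree S) (hcard : Fintype.card G ≤ 2 * #S) {s : G}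
    (hs : s ∈ S) (x : G) : x + s ∈ S ↔ x ∉ S := by
  classical
  refine ⟨fun hxs hx ↦ hS x hx s hs hxs, fun hx ↦ ?_⟩
  have translate_eq_compl : S.map (addRightEmbedding s) = Sᶜ := by
    refine eq_of_subset_of_card_le (fun y hy ↦ ?_) (by rw [card_compl, card_map]; lia)
    obtain ⟨a, ha, rfl⟩ := mem_map.1 hy
    exact mem_compl.2 (hS a ha s hs)
  by_contra hxs
  rw [← mem_compl, ← translate_eq_compl] at hxs
  exact hx ((mem_map' (addRightEmbedding s)).1 hxs)

theorem exists_addSubgroup_index_eq_two (hS : IsSumFree S) (hcard : Fintype.card G ≤ 2 * #S) :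
    ∃ H : AddSubgroup G, H.index = 2 ∧ ∀ x, x ∈ H ↔ x ∉ S := by
  have add_mem_iff {s : G} (hs : s ∈ S) (x : G) := hS.add_mem_iff_notMem hcard hs x
  obtain ⟨s, hs⟩ : S.Nonempty := card_pos.1 (by have := Fintype.card_pos (α := G); lia)
  have zero_notMem : (0 : G) ∉ S := fun h ↦ hS 0 h 0 h (by rwa [add_zero])
  let H : AddSubgroup G :=
    { carrier := {x | x ∉ S}
      zero_mem' := zero_notMem
      add_mem' := fun {x y} hx hy ↦ by
        have hys : y + s ∈ S := (add_mem_iff hs y).2 hy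
        rw [Set.mem_ofPred_eq, ← add_mem_iff hs, add_assoc]
        exact (add_mem_iff hys x).2 hx
      neg_mem' := fun {x} hx hneg ↦
        zero_notMem (by simpa only [add_neg_cancel] using (add_mem_iff hneg x).2 hx) }
  refine ⟨H, AddSubgroup.index_eq_two_iff.2 ⟨s, fun x ↦ ?_⟩, fun x ↦ Iff.rfl⟩
  change Xor (x + s ∉ S) (x ∉ S)
  rw [add_mem_iff hs, xor_iff_not_iff]
  exact not_iff_self

end IsSumFree

/-- Three distinct vectors over `ZMod 2` forming a 1-free set: `ZMod.val` turns their entries into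
the natural numbers `0` and `1`, which are then summed in `ℕ`. -/
structure OneFreeTriple {ι : Type*} (x y z : ι → ZMod 2) : Prop where
  ne_fst_snd : x ≠ y
  ne_fst_trd : x ≠ z
  ne_snd_trd : y ≠ z
  sum_ne_one : ∀ i, (x i).val + (y i).val + (z i).val ≠ 1

section OneFreeTriple

variable {ι : Type*}

theorem oneFreeTriple_add {t p q : ι → ZMod 2} (hp : p ≠ 0) (hq : q ≠ 0) (hpq : p ≠ q)
    (htp : t * p = 0) (htq : t * q = 0) : OneFreeTriple (t + p) (t + q) (t + p + q) where
  ne_fst_snd := (add_right_injective t).ne hpq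
  ne_fst_trd := left_ne_add.2 hq
  ne_snd_trd := by rw [add_right_comm]; exact left_ne_add.2 hp
  sum_ne_one i := by
    have pointwise : ∀ a b c : ZMod 2, a * b = 0 → a * c = 0 →
        (a + b).val + (a + c).val + (a + b + c).val ≠ 1 := by decide
    exact pointwise (t i) (p i) (q i) (congr_fun htp i) (congr_fun htq i)

theorem exists_single_notMem_of_ne_top [Finite ι] [DecidableEq ι] {H : AddSubgroup (ι → ZMod 2)}
    (hH : H ≠ ⊤) : ∃ i, Pi.single i 1 ∉ H := by
  contrapose! hH
  refine (AddSubgroup.eq_top_iff' H).2 fun x ↦ AddSubgroup.pi_mem_of_single_mem x fun i ↦ ?_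
  obtain hi | hi : x i = 0 ∨ x i = 1 := by generalize x i = a; revert a; decide
  · rw [hi, Pi.single_zero]
    exact H.zero_mem
  · rw [hi]
    exact hH i

variable [Fintype ι]

theorem exists_ne_zero_ne_mem_apply_eq_zero_of_index_le_two (hι : 4 ≤ Fintype.card ι)
    {H : AddSubgroup (ι → ZMod 2)} (hH : H.index ≤ 2) (i : ι) :
    ∃ p ∈ H, ∃ q ∈ H, p ≠ 0 ∧ q ≠ 0 ∧ p ≠ q ∧ p i = 0 ∧ q i = 0 := by
  let K := (Pi.evalAddMonoidHom (fun _ : ι ↦ ZMod 2) i).ker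
  have index_K_le : K.index ≤ 2 := by
    rw [AddSubgroup.index_ker]
    exact (AddSubgroup.card_le_card_addGroup _).trans_eq (Nat.card_zmod 2)
  have index_inf_le : (H ⊓ K).index ≤ 2 * 2 :=
    AddSubgroup.index_inf_le.trans (Nat.mul_le_mul hH index_K_le)
  have three_le_card : 3 ≤ Nat.card ↥(H ⊓ K) := by
    have card_mul_index : Nat.card ↥(H ⊓ K) * (H ⊓ K).index = 2 ^ Fintype.card ι := by
      rw [AddSubgroup.card_mul_index, Nat.card_fun, Nat.card_zmod, Nat.card_eq_fintype_card]
    have : 2 ^ 4 ≤ 2 ^ Fintype.card ι := Nat.pow_le_pow_right two_pos hι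
    nlinarith
  have exists_ne_ne := ENat.exists_ne_ne_of_three_le (α := ↥(H ⊓ K))
    (by rw [ENat.card_eq_coe_natCard]; exact_mod_cast three_le_card)
  obtain ⟨⟨p, hpH, hpK⟩, hp, -⟩ := exists_ne_ne 0 0
  obtain ⟨⟨q, hqH, hqK⟩, hq, hqp⟩ := exists_ne_ne 0 ⟨p, hpH, hpK⟩
  exact ⟨p, hpH, q, hqH, Subtype.coe_ne_coe.2 hp, Subtype.coe_ne_coe.2 hq,
    Subtype.coe_ne_coe.2 hqp.symm, hpK, hqK⟩

theorem exists_oneFreeTriple_notMem_of_index_eq_two (hι : 4 ≤ Fintype.card ι)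
    {H : AddSubgroup (ι → ZMod 2)} (hH : H.index = 2) :
    ∃ x ∉ H, ∃ y ∉ H, ∃ z ∉ H, OneFreeTriple x y z := by
  classical
  obtain ⟨i, hi⟩ : ∃ i, Pi.single i 1 ∉ H :=
    exists_single_notMem_of_ne_top fun h ↦ by simp [h] at hH
  obtain ⟨p, hpH, q, hqH, hp, hq, hpq, hpi, hqi⟩ :=
    exists_ne_zero_ne_mem_apply_eq_zero_of_index_le_two hι hH.le i
  have single_mul_eq_zero {x : ι → ZMod 2} (hx : x i = 0) : Pi.single i 1 * x = 0 := by
    rw [← Pi.single_mul_left, hx, mul_zero, Pi.single_zero]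
  have add_notMem {x y : ι → ZMod 2} (hx : x ∉ H) (hy : y ∈ H) : x + y ∉ H :=
    fun h ↦ hx ((H.add_mem_cancel_right hy).1 h)
  exact ⟨_, add_notMem hi hpH, _, add_notMem hi hqH, _, add_notMem (add_notMem hi hpH) hqH,
    oneFreeTriple_add hp hq hpq (single_mul_eq_zero hpi) (single_mul_eq_zero hqi)⟩

theorem exists_oneFreeTriple_of_two_pow_card_le (hι : 4 ≤ Fintype.card ι)
    {F : Finset (ι → ZMod 2)} (hF : 2 ^ Fintype.card ι ≤ 2 * #F) (zero_notMem : 0 ∉ F) :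
    ∃ x ∈ F, ∃ y ∈ F, ∃ z ∈ F, OneFreeTriple x y z := by
  classical
  by_cases sumFree : IsSumFree F
  · obtain ⟨H, hH, mem_H_iff⟩ := sumFree.exists_addSubgroup_index_eq_two (by simpa using hF)
    simpa only [mem_H_iff, not_not] using exists_oneFreeTriple_notMem_of_index_eq_two hι hH
  · unfold IsSumFree at sumFree
    push Not at sumFree
    obtain ⟨x, hx, y, hy, hxy⟩ := sumFree
    have ne_zero_of_mem {z : ι → ZMod 2} (hz : z ∈ F) : z ≠ 0 := ne_of_mem_of_not_mem hz zero_notMem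
    have hne : x ≠ y := by
      rintro rfl
      exact ne_zero_of_mem hxy (funext fun i ↦ CharTwo.add_self_eq_zero (x i))
    have triple := oneFreeTriple_add (ne_zero_of_mem hx) (ne_zero_of_mem hy) hne
      (zero_mul x) (zero_mul y)
    rw [zero_add, zero_add] at triple
    exact ⟨x, hx, y, hy, x + y, hxy, triple⟩

theorem exists_card_le_three_forall_sum_val_ne_one {κ : Type*} [Fintype κ]
    (hι : 4 ≤ Fintype.card ι) (hκ : 2 ^ Fintype.card ι ≤ 2 * Fintype.card κ)
    (v : κ → ι → ZMod 2) :
    ∃ S : Finset κ, S.Nonempty ∧ #S ≤ 3 ∧ ∀ i, ∑ j ∈ S, (v j i).val ≠ 1 := by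
  classical
  by_cases hzero : ∃ j, v j = 0
  · obtain ⟨j, hj⟩ := hzero
    exact ⟨{j}, singleton_nonempty j, by simp, by simp [hj]⟩
  by_cases hinj : Function.Injective v
  · obtain ⟨x, hx, y, hy, z, hz, triple⟩ :=
      exists_oneFreeTriple_of_two_pow_card_le (F := univ.image v) hι
        (by rwa [card_image_of_injective _ hinj, card_univ]) (by simpa using hzero)
    obtain ⟨j, -, rfl⟩ := mem_image.1 hx
    obtain ⟨k, -, rfl⟩ := mem_image.1 hy
    obtain ⟨l, -, rfl⟩ := mem_image.1 hz
    have hjk : j ≠ k := ne_of_apply_ne v triple.ne_fst_snd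
    have hjl : j ≠ l := ne_of_apply_ne v triple.ne_fst_trd
    have hkl : k ≠ l := ne_of_apply_ne v triple.ne_snd_trd
    refine ⟨{j, k, l}, insert_nonempty j _, card_le_three, fun i ↦ ?_⟩
    rw [sum_insert (by simp [hjk, hjl]), sum_pair hkl, ← add_assoc]
    exact triple.sum_ne_one i
  · obtain ⟨j, k, hjk, hne⟩ := Function.not_injective_iff.1 hinj
    refine ⟨{j, k}, insert_nonempty j _, card_le_two.trans (by simp), fun i ↦ ?_⟩
    rw [sum_pair hne, hjk]
    lia

end OneFreeTriple

theorem stmt_11_general {ι κ : Type*} [Fintype ι] [Fintype κ] (hι : 4 ≤ Fintype.card ι)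
    (hκ : 2 ^ Fintype.card ι ≤ 2 * Fintype.card κ) (A : ι → κ → ℕ) (hA : ∀ i j, A i j ≤ 1) :
    ∃ S : Finset κ, S.Nonempty ∧ #S ≤ 3 ∧ ∀ i, ∑ j ∈ S, A i j ≠ 1 := by
  have val_cast (i : ι) (j : κ) : (A i j : ZMod 2).val = A i j :=
    ZMod.val_cast_of_lt (Nat.lt_succ_of_le (hA i j))
  simpa only [val_cast] using
    exists_card_le_three_forall_sum_val_ne_one hι hκ fun j i ↦ (A i j : ZMod 2)

/-- Every `4 × 8` binary matrix has a nonempty 1-free set of at most `3` columns. -/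
theorem stmt_11 (A : Fin 4 → Fin 8 → ℕ) (hA : ∀ i j, A i j ≤ 1) :
    ∃ S : Finset (Fin 8), S.Nonempty ∧ S.card ≤ 3 ∧ ∀ i, ∑ j ∈ S, A i j ≠ 1 :=
  stmt_11_general (by simp) (by simp) A hA
end

section
/- For every positive integer m, every binary (7m−1)×(7m+2) matrix has a nonempty even set of at most 4m columns; consequently ε(7m−1, 7m+2) ≤ 4m, which is strictly smaller than ⌊(4(7m−1)+12)/7⌋ = 4m+1. -/
/-!
The nonempty even sets of columns are the supports of the nonzero kernel vectors modulo 2.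
Among the `2 ^ k` vectors of a `k`-dimensional binary code of length `n`, each coordinate is nonzero
in at most half, so some nonzero codeword has weight at most `n * 2 ^ (k - 1) / (2 ^ k - 1)`
(Plotkin). For `n = 7 * m + 2` and `k = 3` this only gives `4 * m + 1`. Adding a parity bit to every
codeword makes all weights even at the cost of raising `n` by one: every nonzero weight being at
least `4 * m + 2` would then give `7 * (4 * m + 2) ≤ 4 * (7 * m + 3)`, which is false.
-/

open Finset
open scoped Matrix

section Plotkin

variable {V G κ : Type*} [AddGroup V] [Fintype V] [AddGroup G] [Fintype G] [DecidableEq G]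

lemma card_le_card_mul_card_filter_eq_zero (f : V →+ G) :
    Fintype.card V ≤ Fintype.card G * #{v | f v = 0} := by
  have card_ker : Nat.card f.ker = #{v | f v = 0} := by
    rw [← Fintype.card_subtype, ← Nat.card_eq_fintype_card]
    rfl
  calc Fintype.card V = Nat.card f.ker * Nat.card f.range := by
        rw [← AddSubgroup.index_ker, AddSubgroup.card_mul_index, Nat.card_eq_fintype_card]
    _ ≤ Nat.card f.ker * Nat.card G := Nat.mul_le_mul_left _ f.range.card_le_card_addGroup
    _ = Fintype.card G * #{v | f v = 0} := by
        rw [card_ker, Nat.card_eq_fintype_card, mul_comm]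

lemma card_mul_card_filter_ne_zero_le (f : V →+ G) :
    Fintype.card G * #{v | f v ≠ 0} ≤ (Fintype.card G - 1) * Fintype.card V := by
  have partition : #{v | f v = 0} + #{v | f v ≠ 0} = Fintype.card V :=
    card_filter_add_card_filter_not _
  have zeros := card_le_card_mul_card_filter_eq_zero f
  rw [Nat.sub_one_mul, ← partition, mul_add, partition]
  omega

variable [Fintype κ]

lemma card_mul_sum_hammingNorm_le (φ : V →+ κ → G) :
    Fintype.card G * ∑ v, hammingNorm (φ v) ≤
      (Fintype.card G - 1) * (Fintype.card κ * Fintype.card V) := by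
  have double_count : ∑ v, hammingNorm (φ v) = ∑ j, #{v | φ v j ≠ 0} :=
    sum_card_bipartiteAbove_eq_sum_card_bipartiteBelow fun v j ↦ φ v j ≠ 0
  calc Fintype.card G * ∑ v, hammingNorm (φ v)
      = ∑ j, Fintype.card G * #{v | φ v j ≠ 0} := by rw [double_count, mul_sum]
    _ ≤ ∑ _j : κ, (Fintype.card G - 1) * Fintype.card V :=
        sum_le_sum fun j _ ↦
          card_mul_card_filter_ne_zero_le ((Pi.evalAddMonoidHom (fun _ ↦ G) j).comp φ)
    _ = (Fintype.card G - 1) * (Fintype.card κ * Fintype.card V) := by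
        rw [sum_const, card_univ, smul_eq_mul, mul_left_comm]

theorem exists_ne_zero_hammingNorm_le_plotkin [Nontrivial V] (φ : V →+ κ → G) :
    ∃ v ≠ 0, Fintype.card G * ((Fintype.card V - 1) * hammingNorm (φ v)) ≤
      (Fintype.card G - 1) * (Fintype.card κ * Fintype.card V) := by
  classical
  have card_nonzero : #(univ.erase (0 : V)) = Fintype.card V - 1 := card_erase_of_mem (mem_univ 0)
  have nonempty : (univ.erase (0 : V)).Nonempty := by
    obtain ⟨v, hv⟩ := exists_ne (0 : V)
    exact ⟨v, mem_erase.2 ⟨hv, mem_univ v⟩⟩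
  obtain ⟨v, hv, hle⟩ := exists_le_of_sum_le nonempty
    (f := fun v ↦ Fintype.card G * ((Fintype.card V - 1) * hammingNorm (φ v)))
    (g := fun _ ↦ (Fintype.card G - 1) * (Fintype.card κ * Fintype.card V)) <| by
      have sum_nonzero : ∑ v ∈ univ.erase 0, hammingNorm (φ v) = ∑ v, hammingNorm (φ v) :=
        sum_erase _ (by rw [map_zero, hammingNorm_zero])
      rw [← mul_sum, ← mul_sum, sum_nonzero, sum_const, card_nonzero, smul_eq_mul, mul_left_comm]
      exact Nat.mul_le_mul_left _ (card_mul_sum_hammingNorm_le φ)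
  exact ⟨v, ne_of_mem_erase hv, hle⟩

end Plotkin

section EvenSets

variable {ι κ : Type*}

/-- The parity extension of a matrix: one more column, and one more row of ones that is the only
row to meet it. Its even sets are the even sets of the original matrix, completed by the new column
to an even number of columns. -/
def parityExtension (A : Matrix ι κ ℕ) : Matrix (ι ⊕ Unit) (κ ⊕ Unit) ℕ :=
  Matrix.fromBlocks A 0 (fun _ _ ↦ 1) 1

lemma even_sum_parityExtension_iff (A : Matrix ι κ ℕ) (S : Finset (κ ⊕ Unit)) :
    (∀ i, Even (∑ j ∈ S, parityExtension A i j)) ↔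
      (∀ i, Even (∑ j ∈ S.toLeft, A i j)) ∧ Even #S := by
  have row_inl (i : ι) : ∑ j ∈ S, parityExtension A (.inl i) j = ∑ j ∈ S.toLeft, A i j := by
    rw [sum_sum_eq_sum_toLeft_add_sum_toRight]
    simp [parityExtension, Matrix.fromBlocks]
  have row_inr (u : Unit) : ∑ j ∈ S, parityExtension A (.inr u) j = #S := by
    rw [sum_sum_eq_sum_toLeft_add_sum_toRight, ← card_toLeft_add_card_toRight]
    simp [parityExtension, Matrix.fromBlocks]
  simp only [Sum.forall, row_inl, row_inr, forall_const]

variable [Fintype κ]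

lemma even_sum_support_iff_mulVec_eq_zero (A : Matrix ι κ ℕ) (x : κ → ZMod 2) :
    (∀ i, Even (∑ j with x j ≠ 0, A i j)) ↔ A.map (Nat.cast : ℕ → ZMod 2) *ᵥ x = 0 := by
  have eq_one_of_ne_zero : ∀ a : ZMod 2, a ≠ 0 → a = 1 := by decide
  refine Iff.trans (forall_congr' fun i ↦ ?_) funext_iff.symm
  rw [← ZMod.natCast_eq_zero_iff_even, Nat.cast_sum, sum_filter]
  suffices ∑ j, (if x j ≠ 0 then (A i j : ZMod 2) else 0) = ∑ j, (A i j : ZMod 2) * x j by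
    rw [this]; rfl
  refine sum_congr rfl fun j _ ↦ ?_
  split_ifs with hj
  · rw [eq_one_of_ne_zero _ hj, mul_one]
  · rw [not_not.1 hj, mul_zero]

variable [Fintype ι]

lemma exists_injective_linearMap_mulVec_eq_zero {F : Type*} [Field F] {k : ℕ}
    (M : Matrix ι κ F) (hk : Fintype.card ι + k ≤ Fintype.card κ) :
    ∃ φ : (Fin k → F) →ₗ[F] κ → F, Function.Injective φ ∧ ∀ v, M *ᵥ φ v = 0 := by
  have le_finrank_ker :
      Module.finrank F (Fin k → F) ≤ Module.finrank F (LinearMap.ker M.mulVecLin) := by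
    have rank_nullity := M.mulVecLin.finrank_range_add_finrank_ker
    have range_le := (LinearMap.range M.mulVecLin).finrank_le
    simp only [Module.finrank_fintype_fun_eq_card, Fintype.card_fin] at rank_nullity range_le ⊢
    omega
  obtain ⟨ψ, hψ⟩ := finrank_le_iff_exists_linearMap.1 le_finrank_ker
  exact ⟨(LinearMap.ker M.mulVecLin).subtype ∘ₗ ψ, Subtype.val_injective.comp hψ,
    fun v ↦ (ψ v).2⟩

theorem exists_even_set_card_le_plotkin {k : ℕ} [NeZero k] (A : Matrix ι κ ℕ)
    (hk : Fintype.card ι + k ≤ Fintype.card κ) :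
    ∃ S : Finset κ, S.Nonempty ∧ (∀ i, Even (∑ j ∈ S, A i j)) ∧
      2 * ((2 ^ k - 1) * #S) ≤ 2 ^ k * Fintype.card κ := by
  obtain ⟨φ, φ_injective, mulVec_φ⟩ :=
    exists_injective_linearMap_mulVec_eq_zero (A.map (Nat.cast : ℕ → ZMod 2)) hk
  obtain ⟨v, hv, hle⟩ := exists_ne_zero_hammingNorm_le_plotkin φ.toAddMonoidHom
  refine ⟨({j | φ v j ≠ 0} : Finset κ), ?_,
    (even_sum_support_iff_mulVec_eq_zero A _).2 (mulVec_φ v), ?_⟩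
  · obtain ⟨j, hj⟩ := Function.ne_iff.1 ((map_ne_zero_iff φ φ_injective).2 hv)
    exact ⟨j, mem_filter.2 ⟨mem_univ j, hj⟩⟩
  · rw [Fintype.card_fun, ZMod.card, Fintype.card_fin, show 2 - 1 = 1 from rfl, one_mul,
      mul_comm (Fintype.card κ)] at hle
    exact hle

theorem exists_even_set_card_le_of_even {k d : ℕ} (A : Matrix ι κ ℕ)
    (hk : Fintype.card ι + k ≤ Fintype.card κ) (hd : Even d)
    (hlt : 2 ^ k * (Fintype.card κ + 1) < 2 * ((2 ^ k - 1) * (d + 2))) :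
    ∃ S : Finset κ, S.Nonempty ∧ (∀ i, Even (∑ j ∈ S, A i j)) ∧ #S ≤ d := by
  have : NeZero k := ⟨by rintro rfl; simp at hlt⟩
  obtain ⟨S, S_nonempty, S_even, S_card⟩ := exists_even_set_card_le_plotkin (k := k)
    (parityExtension A) (by simp only [Fintype.card_sum, Fintype.card_unit]; omega)
  obtain ⟨toLeft_even, card_even⟩ := (even_sum_parityExtension_iff A S).1 S_even
  have card_lt : #S < d + 2 := by
    rw [Fintype.card_sum, Fintype.card_unit] at S_card
    exact lt_of_mul_lt_mul_left (lt_of_mul_lt_mul_left (S_card.trans_lt hlt) (Nat.zero_le _))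
      (Nat.zero_le _)
  have card_le : #S ≤ d := by grind
  refine ⟨S.toLeft, ?_, toLeft_even, card_toLeft_le.trans card_le⟩
  -- An even nonempty set has at least two elements, and only one of them can be the added column.
  have card_split := card_toLeft_add_card_toRight (u := S)
  have card_toRight_le : #S.toRight ≤ 1 := card_le_univ _
  rw [← card_pos] at S_nonempty ⊢
  grind

end EvenSets

lemma codeDistance_le_card {r n : ℕ} {A : Fin r → Fin n → ℕ} {S : Finset (Fin n)}
    (hS : S.Nonempty) (hA : ∀ i, Even (∑ j ∈ S, A i j)) : codeDistance A ≤ #S :=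
  Nat.sInf_le ⟨S, hS, hA, rfl⟩

lemma maxCodeDistance_le {r n d : ℕ}
    (h : ∀ A : Fin r → Fin n → ℕ, (∀ i j, A i j ≤ 1) → codeDistance A ≤ d) :
    maxCodeDistance r n ≤ d :=
  csSup_le' <| by rintro _ ⟨A, hA, rfl⟩; exact h A hA

theorem stmt_18_general {r n k d : ℕ} (hk : r + k ≤ n) (hd : Even d)
    (hlt : 2 ^ k * (n + 1) < 2 * ((2 ^ k - 1) * (d + 2))) :
    (∀ A : Fin r → Fin n → ℕ, ∃ S : Finset (Fin n), S.Nonempty ∧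
      (∀ i, Even (∑ j ∈ S, A i j)) ∧ #S ≤ d) ∧
    maxCodeDistance r n ≤ d := by
  have exists_even_set (A : Fin r → Fin n → ℕ) : ∃ S : Finset (Fin n), S.Nonempty ∧
      (∀ i, Even (∑ j ∈ S, A i j)) ∧ #S ≤ d :=
    exists_even_set_card_le_of_even A (by simpa using hk) hd (by simpa using hlt)
  refine ⟨exists_even_set, maxCodeDistance_le fun A _ ↦ ?_⟩
  obtain ⟨S, S_nonempty, S_even, S_card⟩ := exists_even_set A
  exact (codeDistance_le_card S_nonempty S_even).trans S_card

/-- For every positive integer `m`, every binary `(7m−1) × (7m+2)` matrix has a nonempty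
even set of at most `4m` columns; consequently `ε(7m−1, 7m+2) ≤ 4m`, which is strictly
smaller than `⌊(4(7m−1)+12)/7⌋ = 4m+1`. -/
theorem stmt_18 (m : ℕ) (hm : 0 < m) :
    (∀ A : Fin (7 * m - 1) → Fin (7 * m + 2) → ℕ, (∀ i j, A i j ≤ 1) →
      ∃ S : Finset (Fin (7 * m + 2)), S.Nonempty ∧
        (∀ i, Even (∑ j ∈ S, A i j)) ∧ S.card ≤ 4 * m) ∧
    maxCodeDistance (7 * m - 1) (7 * m + 2) ≤ 4 * m ∧
    4 * m < (4 * (7 * m - 1) + 12) / 7 := by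
  obtain ⟨exists_even_set, maxDistance_le⟩ := stmt_18_general (k := 3) (d := 4 * m)
    (show 7 * m - 1 + 3 ≤ 7 * m + 2 by omega) ⟨2 * m, by omega⟩ (by omega)
  exact ⟨fun A _ ↦ exists_even_set A, maxDistance_le, by omega⟩
end

section
/- Let A be an m×n binary matrix whose i-th row has exactly one 1-entry, located in column j, and let B be the (m−1)×(n−1) matrix obtained from A by deleting row i and column j. Then a nonempty set S of columns of A is 1-free (respectively, even) if and only if S does not contain column j and the corresponding set of columns of B is 1-free (respectively, even). Consequently, the minimum cardinality of a nonempty 1-free set of columns of A equals that of B, and likewise for nonempty even sets, whenever these minima exist. -/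
/-! Row `i` of a sum of columns is `A i j` or `0` according to whether column `j` is used. A
condition on entries that holds for `0` and fails for `A i j` therefore rules out column `j`, and
once `j` is ruled out it holds on row `i`; so row `i` and column `j` can be deleted together. When
`A i j = 1`, both `· ≠ 1` and `Even` are such conditions. -/

section

variable {ι ι' κ κ' M : Type*} [AddCommMonoid M]

/-- Every entry of the sum of the columns of `A` in `S` satisfies `P`. For a matrix over `ℕ`, the
1-free sets are the case `P = (· ≠ 1)` and the even sets are the case `P = Even`; here the empty set
is allowed. -/
def ColumnSumSatisfies (P : M → Prop) (A : Matrix ι κ M) (S : Finset κ) : Prop :=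
  ∀ r, P (∑ c ∈ S, A r c)

/-- The cardinalities of the nonempty sets `S` with `ColumnSumSatisfies P A S`. Their minimum is
`sInf (columnSumCards P A)`, which takes the junk value `0` if there is no such `S`. -/
def columnSumCards (P : M → Prop) (A : Matrix ι κ M) : Set ℕ :=
  {k | ∃ S : Finset κ, S.Nonempty ∧ ColumnSumSatisfies P A S ∧ S.card = k}

variable {P : M → Prop} {A : Matrix ι κ M} {S : Finset κ} {i : ι} {j : κ} {f : ι' → ι} {g : κ' ↪ κ}

theorem ColumnSumSatisfies.notMem (hS : ColumnSumSatisfies P A S) (hPj : ¬ P (A i j))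
    (hrow : ∀ c, c ≠ j → A i c = 0) : j ∉ S := by
  intro hj
  have hsum : ∑ c ∈ S, A i c = A i j := Finset.sum_eq_single_of_mem j hj fun c _ => hrow c
  exact hPj (hsum ▸ hS i)

theorem columnSumSatisfies_submatrix_rows_iff (hP : P 0) (hf : {i}ᶜ ⊆ Set.range f)
    (hi : ∀ c ∈ S, A i c = 0) :
    ColumnSumSatisfies P (A.submatrix f id) S ↔ ColumnSumSatisfies P A S := by
  refine ⟨fun h r => ?_, fun h r => h (f r)⟩
  by_cases hr : r = i
  · rwa [hr, Finset.sum_eq_zero hi]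
  · obtain ⟨r', rfl⟩ := hf hr
    exact h r'

theorem columnSumSatisfies_map_iff {T : Finset κ'} :
    ColumnSumSatisfies P A (T.map g) ↔ ColumnSumSatisfies P (A.submatrix id g) T := by
  simp only [ColumnSumSatisfies, Finset.sum_map, Matrix.submatrix_apply, id]

theorem columnSumSatisfies_map_iff_submatrix (hP : P 0) (hrow : ∀ c, c ≠ j → A i c = 0)
    (hf : {i}ᶜ ⊆ Set.range f) (hj : j ∉ Set.range g) {T : Finset κ'} :
    ColumnSumSatisfies P A (T.map g) ↔ ColumnSumSatisfies P (A.submatrix f g) T := by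
  have hi : ∀ c ∈ T, A.submatrix id g i c = 0 := fun c _ => hrow _ fun hc => hj ⟨c, hc⟩
  rw [columnSumSatisfies_map_iff, ← columnSumSatisfies_submatrix_rows_iff hP hf hi]
  rfl

theorem map_preimage_of_coe_subset_range (hS : ↑S ⊆ Set.range g) :
    (S.preimage g g.injective.injOn).map g = S := by
  classical
  rw [Finset.map_eq_image, Finset.image_preimage, Finset.filter_true_of_mem]
  exact hS

theorem columnSumSatisfies_iff_notMem_and_preimage (hP : P 0) (hPj : ¬ P (A i j))
    (hrow : ∀ c, c ≠ j → A i c = 0) (hf : {i}ᶜ ⊆ Set.range f) (hg : Set.range g = {j}ᶜ) :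
    ColumnSumSatisfies P A S ↔
      j ∉ S ∧ ColumnSumSatisfies P (A.submatrix f g) (S.preimage g g.injective.injOn) := by
  rw [← columnSumSatisfies_map_iff_submatrix hP hrow hf (by simp [hg])]
  have map_preimage (hj : j ∉ S) : (S.preimage g g.injective.injOn).map g = S :=
    map_preimage_of_coe_subset_range (by simpa [hg] using hj)
  refine ⟨fun hS => ?_, fun ⟨hj, hS⟩ => map_preimage hj ▸ hS⟩
  have hj := hS.notMem hPj hrow
  exact ⟨hj, (map_preimage hj).symm ▸ hS⟩

theorem columnSumCards_submatrix (hP : P 0) (hPj : ¬ P (A i j))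
    (hrow : ∀ c, c ≠ j → A i c = 0) (hf : {i}ᶜ ⊆ Set.range f) (hg : Set.range g = {j}ᶜ) :
    columnSumCards P (A.submatrix f g) = columnSumCards P A := by
  have hj : j ∉ Set.range g := by simp [hg]
  have map_iff (T : Finset κ') : ColumnSumSatisfies P A (T.map g) ↔
      ColumnSumSatisfies P (A.submatrix f g) T :=
    columnSumSatisfies_map_iff_submatrix hP hrow hf hj
  ext k
  constructor
  · rintro ⟨T, hne, hT, rfl⟩
    exact ⟨T.map g, hne.map, (map_iff T).2 hT, T.card_map g⟩
  · rintro ⟨S, hne, hS, rfl⟩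
    have hS_range : ↑S ⊆ Set.range g := by simpa [hg] using hS.notMem hPj hrow
    obtain ⟨T, rfl⟩ : ∃ T : Finset κ', T.map g = S :=
      ⟨_, map_preimage_of_coe_subset_range hS_range⟩
    exact ⟨T, Finset.map_nonempty.1 hne, (map_iff T).1 hS, (T.card_map g).symm⟩

theorem stmt_19_general (hP : P 0) (hPj : ¬ P (A i j)) (hrow : ∀ c, c ≠ j → A i c = 0)
    (hf : {i}ᶜ ⊆ Set.range f) (hg : Set.range g = {j}ᶜ) :
    (∀ S : Finset κ, ColumnSumSatisfies P A S ↔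
      j ∉ S ∧ ColumnSumSatisfies P (A.submatrix f g) (S.preimage g g.injective.injOn)) ∧
    columnSumCards P A = columnSumCards P (A.submatrix f g) :=
  ⟨fun _ => columnSumSatisfies_iff_notMem_and_preimage hP hPj hrow hf hg,
    (columnSumCards_submatrix hP hPj hrow hf hg).symm⟩

end

/-- Let `A` be an `(m+1) × (n+1)` binary matrix whose row `i` has exactly one 1-entry,
located in column `j`, and let `B` be the `m × n` matrix obtained from `A` by deleting
row `i` and column `j`.  Then a nonempty set `S` of columns of `A` is 1-free
(resp. even) iff `j ∉ S` and the corresponding set of columns of `B` is 1-free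
(resp. even).  Consequently the minimum cardinality of a nonempty 1-free set of columns
of `A` equals that of `B`, and likewise for even sets. -/
theorem stmt_19 (m n : ℕ) (A : Fin (m + 1) → Fin (n + 1) → ℕ)
    (hbin : ∀ r c, A r c ≤ 1)
    (i : Fin (m + 1)) (j : Fin (n + 1))
    (hij : A i j = 1) (hrow : ∀ c, c ≠ j → A i c = 0)
    (B : Fin m → Fin n → ℕ)
    (hB : ∀ r c, B r c = A (i.succAbove r) (j.succAbove c)) :
    (∀ S : Finset (Fin (n + 1)), S.Nonempty →
      (((∀ r, ∑ c ∈ S, A r c ≠ 1) ↔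
          j ∉ S ∧ ∀ r, ∑ c ∈ S.preimage j.succAbove Fin.succAbove_right_injective.injOn,
            B r c ≠ 1) ∧
        ((∀ r, Even (∑ c ∈ S, A r c)) ↔
          j ∉ S ∧ ∀ r, Even (∑ c ∈ S.preimage j.succAbove Fin.succAbove_right_injective.injOn,
            B r c)))) ∧
    sInf {c | ∃ S : Finset (Fin (n + 1)), S.Nonempty ∧ (∀ r, ∑ x ∈ S, A r x ≠ 1) ∧ S.card = c} =
      sInf {c | ∃ S : Finset (Fin n), S.Nonempty ∧ (∀ r, ∑ x ∈ S, B r x ≠ 1) ∧ S.card = c} ∧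
    sInf {c | ∃ S : Finset (Fin (n + 1)), S.Nonempty ∧ (∀ r, Even (∑ x ∈ S, A r x)) ∧ S.card = c} =
      sInf {c | ∃ S : Finset (Fin n), S.Nonempty ∧ (∀ r, Even (∑ x ∈ S, B r x)) ∧ S.card = c} := by
  obtain rfl : B = Matrix.submatrix A i.succAbove j.succAboveEmb := funext₂ hB
  have delete (P : ℕ → Prop) (hP : P 0) (hP' : ¬ P 1) :=
    stmt_19_general (A := A) (g := j.succAboveEmb) hP (hij ▸ hP') hrow
      (Fin.range_succAbove i).ge (Fin.range_succAbove j)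
  obtain ⟨oneFree_iff, oneFree_cards⟩ := delete (· ≠ 1) zero_ne_one (not_not.2 rfl)
  obtain ⟨even_iff, even_cards⟩ := delete Even Even.zero Nat.not_even_one
  exact ⟨fun S _ => ⟨oneFree_iff S, even_iff S⟩,
    congrArg sInf oneFree_cards, congrArg sInf even_cards⟩
end
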